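/- arXiv:2506.05778 — 3 statements merged into one kernel-verified Lean document; each statement's English description precedes it below -/
import Mathlib

section
/- For every n ≥ 4, the abelianization of Γ̂_n^4 is isomorphic to the free abelian group ℤ^{N_n}, where N_n = C(n,3) − 1. -/
/-- Ordered quadruples of elements of `Fin n`, used to index the generators `(ijkl)`. -/
abbrev Quad (n : ℕ) : Type := Fin n × Fin n × Fin n × Fin n

/-- The underlying set `{i, j, k, l}` of a quadruple `(i, j, k, l)`. -/
def qFinset {n : ℕ} (q : Quad n) : Finset (Fin n) := {q.1, q.2.1, q.2.2.1, q.2.2.2}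

/-- The four entries of the quadruple are pairwise distinct. -/
def qDistinct {n : ℕ} (q : Quad n) : Prop := (qFinset q).card = 4

/-- The defining relators of the group `Γ̂_n^4` of Kim–Manturov:
generators indexed by quadruples of distinct elements (non-distinct quadruples are killed),
commutativity relations (2), signed pentagon relations (3') and signed dihedral
relations (4'). -/
def gammaHatRels (n : ℕ) : Set (FreeGroup (Quad n)) :=
  {w | ∃ q : Quad n, ¬ qDistinct q ∧ w = FreeGroup.of q} ∪
  {w | ∃ q r : Quad n, qDistinct q ∧ qDistinct r ∧ (qFinset q ∩ qFinset r).card ≤ 2 ∧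
      w = FreeGroup.of q * FreeGroup.of r * (FreeGroup.of q)⁻¹ * (FreeGroup.of r)⁻¹} ∪
  {w | ∃ i j k l m : Fin n, ({i, j, k, l, m} : Finset (Fin n)).card = 5 ∧
      w = FreeGroup.of (i, j, k, l) * FreeGroup.of (i, j, l, m) * FreeGroup.of (j, k, l, m) *
        (FreeGroup.of (i, j, k, m))⁻¹ * (FreeGroup.of (i, k, l, m))⁻¹} ∪
  {w | ∃ i j k l : Fin n, qDistinct (i, j, k, l) ∧
      (w = FreeGroup.of (i, j, k, l) * FreeGroup.of (j, k, l, i) ∨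
       w = FreeGroup.of (i, j, k, l) * FreeGroup.of (l, k, j, i))}

/-- The group `Γ̂_n^4` of Kim–Manturov. -/
abbrev GammaHat (n : ℕ) : Type := PresentedGroup (gammaHatRels n)

/-- The generator `(ijkl)` of `Γ̂_n^4`. -/
def gh {n : ℕ} (q : Quad n) : GammaHat n := PresentedGroup.of q

/-!
Read `(ijkl)` as the flip of a quadrilateral from its diagonal `ik` to its diagonal `jl`. Sending it
to the difference of the two triangulations, `ijk + ikl - ijl - jkl`, respects every relation: the
pentagon relation is the closed cycle of the five triangulations of a pentagon. Flipping both
`ijkl` and `ikjl` gives `2 (ijk - jkl)`, so rationally the image together with a single triangle is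
the whole space of triangle chains, and the rank is at least `C(n,3) - 1`.

Conversely, `C(n,3) - 1` generators suffice. Modulo generators with entries below `v`, the pentagon
relation makes `f(i,j,k) = (ijkv)` a simplicial 2-cocycle with `f(i,j,k) = f(k,j,i)`. If `f`
vanishes whenever its middle argument is `0`, the cocycle condition gives `f(b,c,e) = f(0,c,e)`, and
symmetry makes this independent of `e` too. Hence the `f(a,0,b)` and one `f(0,c,e)` for each `c`
generate.
-/

open Finset Module

theorem card_list_toFinset_eq_length_iff {α : Type*} [DecidableEq α] (l : List α) :
    #l.toFinset = l.length ↔ l.Nodup :=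
  Multiset.toFinset_card_eq_card_iff_nodup (m := (l : Multiset α))

theorem triple_rotate {α : Type*} [DecidableEq α] (a b c : α) :
    ({b, c, a} : Finset α) = {a, b, c} := by
  rw [insert_comm a b, pair_comm a c]

theorem triple_reverse {α : Type*} [DecidableEq α] (a b c : α) :
    ({a, b, c} : Finset α) = {c, b, a} := by
  rw [insert_comm c b, pair_comm c a, insert_comm b a]

theorem card_exchange_induction {α : Type*} [DecidableEq α] {P : Finset α → Prop} {k : ℕ}
    (exchange : ∀ u : Finset α, #u = k → ∀ a ∉ u, ∀ b ∉ u, a ≠ b → P (insert a u) → P (insert b u))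
    {s t : Finset α} (hs : #s = k + 1) (ht : #t = k + 1) (h : P s) : P t := by
  obtain ⟨r, hr⟩ : ∃ r, #(t \ s) = r := ⟨_, rfl⟩
  induction r generalizing s with
  | zero =>
    have hts : t ⊆ s := by simpa [sdiff_eq_empty_iff_subset] using hr
    rwa [eq_of_subset_of_card_le hts (by omega)]
  | succ r ih =>
    obtain ⟨b, hb⟩ : (t \ s).Nonempty := card_pos.1 (by omega)
    obtain ⟨a, ha⟩ : (s \ t).Nonempty := by
      rw [← card_pos, card_sdiff_comm (hs.trans ht.symm)]
      omega
    rw [mem_sdiff] at ha hb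
    have hcard : #(s.erase a) = k := by rw [card_erase_of_mem ha.1, hs, Nat.add_sub_cancel]
    have hb' : b ∉ s.erase a := fun h => hb.2 (mem_of_mem_erase h)
    have hP : P (insert b (s.erase a)) :=
      exchange _ hcard a (notMem_erase a s) b hb' (fun hab => hb.2 (hab ▸ ha.1))
        (by rwa [insert_erase ha.1])
    apply ih (by rw [card_insert_of_notMem hb', hcard]) hP
    have step : t \ insert b (s.erase a) = (t \ s).erase b := by
      ext x
      have : x ∈ t → x ≠ a := fun hx hxa => ha.2 (hxa ▸ hx)
      simp only [mem_sdiff, mem_insert, mem_erase]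
      tauto
    rw [step, card_erase_of_mem (mem_sdiff.2 hb), hr, Nat.add_sub_cancel]

instance {n : ℕ} : DecidablePred (qDistinct (n := n)) := fun _ => Nat.decEq _ _

theorem qDistinct_iff_ne {n : ℕ} {i j k l : Fin n} :
    qDistinct (i, j, k, l) ↔ i ≠ j ∧ i ≠ k ∧ i ≠ l ∧ j ≠ k ∧ j ≠ l ∧ k ≠ l := by
  simpa [qDistinct, qFinset, and_assoc] using card_list_toFinset_eq_length_iff [i, j, k, l]

theorem card_eq_five_iff_qDistinct {n : ℕ} {i j k l m : Fin n} :
    #{i, j, k, l, m} = 5 ↔ qDistinct (i, j, k, l) ∧ i ≠ m ∧ j ≠ m ∧ k ≠ m ∧ l ≠ m := by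
  have h : #{i, j, k, l, m} = 5 ↔ [i, j, k, l, m].Nodup := by
    simpa using card_list_toFinset_eq_length_iff [i, j, k, l, m]
  rw [h, qDistinct_iff_ne]
  simp only [List.nodup_cons, List.mem_cons, List.not_mem_nil, or_false, not_or, not_false_eq_true,
    List.nodup_nil, and_true, ne_eq]
  tauto

namespace qDistinct

variable {n : ℕ} {i j k l : Fin n}

theorem rotate (h : qDistinct (i, j, k, l)) : qDistinct (j, k, l, i) := by
  rw [qDistinct_iff_ne] at h ⊢; tauto

theorem reverse (h : qDistinct (i, j, k, l)) : qDistinct (l, k, j, i) := by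
  rw [qDistinct_iff_ne] at h ⊢; tauto

theorem swap_middle (h : qDistinct (i, j, k, l)) : qDistinct (i, k, j, l) := by
  rw [qDistinct_iff_ne] at h ⊢; tauto

end qDistinct

/-- A function on quadruples with values in an abelian group satisfying the defining relations of
`Γ̂_n^4`, written additively. Such functions are the restrictions to the generators of the
homomorphisms from the abelianization of `Γ̂_n^4`. -/
structure IsPentagonal {n : ℕ} {A : Type*} [AddCommGroup A] (d : Quad n → A) : Prop where
  eq_zero_of_not_qDistinct : ∀ {q}, ¬ qDistinct q → d q = 0
  rotate : ∀ {i j k l}, qDistinct (i, j, k, l) → d (i, j, k, l) = -d (j, k, l, i)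
  reverse : ∀ {i j k l}, qDistinct (i, j, k, l) → d (i, j, k, l) = -d (l, k, j, i)
  pentagon : ∀ {i j k l m}, #{i, j, k, l, m} = 5 →
    d (i, j, k, l) + d (i, j, l, m) + d (j, k, l, m) = d (i, j, k, m) + d (i, k, l, m)

namespace IsPentagonal

variable {n : ℕ} {A : Type*} [AddCommGroup A] {d : Quad n → A}

theorem comp {B : Type*} [AddCommGroup B] (hd : IsPentagonal d) (f : A →+ B) :
    IsPentagonal (f ∘ d) where
  eq_zero_of_not_qDistinct h := by simp [hd.eq_zero_of_not_qDistinct h]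
  rotate h := by simp [hd.rotate h]
  reverse h := by simp [hd.reverse h]
  pentagon h := by simpa using congrArg f (hd.pentagon h)

theorem swap_outer (hd : IsPentagonal d) (i j k l : Fin n) : d (i, j, k, l) = d (k, j, i, l) := by
  by_cases h : qDistinct (i, j, k, l)
  · rw [hd.reverse h, hd.rotate h.reverse, neg_neg]
  · have h' : ¬ qDistinct (k, j, i, l) := fun h' => h h'.rotate.reverse.rotate.rotate
    rw [hd.eq_zero_of_not_qDistinct h, hd.eq_zero_of_not_qDistinct h']

theorem eq_zero_of_largest_last (hd : IsPentagonal d) {s : Set (Fin n)}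
    (hs : ∀ v ∈ s, ∀ a < v, ∀ b < v, ∀ c < v, d (a, b, c, v) = 0)
    {i j k l : Fin n} (hi : i ∈ s) (hj : j ∈ s) (hk : k ∈ s) (hl : l ∈ s) :
    d (i, j, k, l) = 0 := by
  by_cases h : qDistinct (i, j, k, l)
  swap
  · exact hd.eq_zero_of_not_qDistinct h
  have largest : (i < l ∧ j < l ∧ k < l) ∨ (j < i ∧ k < i ∧ l < i) ∨
      (k < j ∧ l < j ∧ i < j) ∨ (l < k ∧ i < k ∧ j < k) := by
    rw [qDistinct_iff_ne] at h; omega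
  rcases largest with ⟨h₁, h₂, h₃⟩ | ⟨h₁, h₂, h₃⟩ | ⟨h₁, h₂, h₃⟩ | ⟨h₁, h₂, h₃⟩
  · exact hs l hl i h₁ j h₂ k h₃
  · rw [hd.rotate h, hs i hi j h₁ k h₂ l h₃, neg_zero]
  · rw [hd.rotate h, hd.rotate h.rotate, hs j hj k h₁ l h₂ i h₃, neg_zero, neg_zero]
  · rw [hd.rotate h, hd.rotate h.rotate, hd.rotate h.rotate.rotate, hs k hk l h₁ i h₂ j h₃,
      neg_zero, neg_zero, neg_zero]

section Cone

variable {v z : Fin n}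

theorem eq_of_middle_eq_zero (hd : IsPentagonal d)
    (below : ∀ a < v, ∀ b < v, ∀ c < v, ∀ e < v, d (a, b, c, e) = 0)
    (middle : ∀ a < v, ∀ b < v, d (a, z, b, v) = 0) (hz : z < v) {b c e : Fin n} (hb : b < v)
    (hc : c < v) (he : e < v) (h : qDistinct (b, z, c, e)) :
    d (b, c, e, v) = d (z, c, e, v) := by
  have h₅ : #{b, z, c, e, v} = 5 :=
    card_eq_five_iff_qDistinct.2 ⟨h, hb.ne, hz.ne, hc.ne, he.ne⟩
  have pentagon := hd.pentagon h₅
  rw [below b hb z hz c hc e he, middle b hb e he, middle b hb c hc] at pentagon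
  simpa using pentagon.symm

theorem first_eq_zero_of_first_eq_zero (hd : IsPentagonal d)
    (below : ∀ a < v, ∀ b < v, ∀ c < v, ∀ e < v, d (a, b, c, e) = 0)
    (middle : ∀ a < v, ∀ b < v, d (a, z, b, v) = 0) (hz : z < v) {b c e : Fin n} (hb : b < v)
    (hc : c < v) (he : e < v) (hez : e ≠ z) (hec : e ≠ c) (hde : d (z, c, e, v) = 0) :
    d (z, c, b, v) = 0 := by
  by_cases h : qDistinct (b, z, c, e)
  · have h' : qDistinct (e, z, c, b) := h.reverse.swap_middle
    calc d (z, c, b, v)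
        = d (e, c, b, v) := (hd.eq_of_middle_eq_zero below middle hz he hc hb h').symm
      _ = d (b, c, e, v) := hd.swap_outer ..
      _ = d (z, c, e, v) := hd.eq_of_middle_eq_zero below middle hz hb hc he h
      _ = 0 := hde
  rcases eq_or_ne b e with rfl | hbe
  · exact hde
  · apply hd.eq_zero_of_not_qDistinct
    rw [qDistinct_iff_ne] at h ⊢
    tauto

theorem eq_zero_of_middle_of_first (hd : IsPentagonal d)
    (below : ∀ a < v, ∀ b < v, ∀ c < v, ∀ e < v, d (a, b, c, e) = 0)
    (middle : ∀ a < v, ∀ b < v, d (a, z, b, v) = 0) (hz : z < v)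
    (first : ∀ c < v, c ≠ z → ∃ e < v, e ≠ z ∧ e ≠ c ∧ d (z, c, e, v) = 0)
    {a b c : Fin n} (ha : a < v) (hb : b < v) (hc : c < v) :
    d (a, b, c, v) = 0 := by
  rcases eq_or_ne b z with rfl | hbz
  · exact middle a ha c hc
  obtain ⟨e, he, hez, heb, hde⟩ := first b hb hbz
  have from_z : ∀ x < v, d (z, b, x, v) = 0 := fun x hx =>
    hd.first_eq_zero_of_first_eq_zero below middle hz hx hb he hez heb hde
  by_cases h : qDistinct (a, z, b, c)
  · rw [hd.eq_of_middle_eq_zero below middle hz ha hb hc h, from_z c hc]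
  rcases eq_or_ne a z with rfl | haz
  · exact from_z c hc
  rcases eq_or_ne c z with rfl | hcz
  · rw [hd.swap_outer, from_z a ha]
  · apply hd.eq_zero_of_not_qDistinct
    rw [qDistinct_iff_ne] at h ⊢
    tauto

end Cone

end IsPentagonal

/-- The increasing triples `a < b < c` in `Fin n`. -/
abbrev IncreasingTriple (n : ℕ) : Type := Fin 3 ↪o Fin n

/-- The increasing triple `a < b < c`. -/
def increasingTriple {n : ℕ} {a b c : Fin n} (hab : a < b) (hbc : b < c) : IncreasingTriple n :=
  OrderEmbedding.ofStrictMono ![a, b, c] (by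
    rw [Fin.strictMono_iff_lt_succ]
    intro i
    fin_cases i <;> simpa)

/-- The increasing triple `0 < 1 < 2`. -/
def initialTriple (m : ℕ) : IncreasingTriple (m + 3) := Fin.castLEOrderEmb (Nat.le_add_left 3 m)

theorem increasingTriple_ne_initialTriple {m : ℕ} {a b c : Fin (m + 3)} (hab : a < b) (hbc : b < c)
    (hc : 2 < c) : increasingTriple hab hbc ≠ initialTriple m := fun h =>
  hc.ne' (DFunLike.congr_fun h 2)

theorem card_increasingTriple (n : ℕ) : Fintype.card (IncreasingTriple n) = n.choose 3 := by
  rw [Fintype.card_congr Set.powersetCard.ofFinEmbEquiv, Fintype.card_eq_nat_card,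
    Set.powersetCard.card, Nat.card_fin]

theorem card_ne_initialTriple (m : ℕ) :
    Fintype.card {t // t ≠ initialTriple m} = (m + 3).choose 3 - 1 := by
  rw [Fintype.card_subtype_compl, Fintype.card_subtype_eq, card_increasingTriple]

/-- The index of the basis element of the abelianization of `Γ̂_n^4` attached to `a < b < c`. The
third entry for `a = 0` is only required to differ from `0` and `b` and to lie below `c`; at the
initial triple there is no such choice, and the quadruple is degenerate. -/
def basisQuad {m : ℕ} (t : IncreasingTriple (m + 3)) : Quad (m + 3) :=
  if t 0 = 0 then (0, t 1, if t 1 = 1 then 2 else 1, t 2) else (t 0, 0, t 1, t 2)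

theorem basisQuad_increasingTriple {m : ℕ} {a b c : Fin (m + 3)} (hab : a < b) (hbc : b < c) :
    basisQuad (increasingTriple hab hbc) =
      if a = 0 then (0, b, if b = 1 then 2 else 1, c) else (a, 0, b, c) :=
  rfl

namespace IsPentagonal

variable {m : ℕ} {A : Type*} [AddCommGroup A] {d : Quad (m + 3) → A}

theorem middle_zero_eq_zero_of_basisQuad (hd : IsPentagonal d)
    (h : ∀ t ≠ initialTriple m, d (basisQuad t) = 0) {a b v : Fin (m + 3)} (hv : 2 < v)
    (ha : a < v) (hb : b < v) : d (a, 0, b, v) = 0 := by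
  have increasing : ∀ a b : Fin (m + 3), a ≠ 0 → a < b → b < v → d (a, 0, b, v) = 0 := by
    intro a b ha hab hbv
    simpa [basisQuad_increasingTriple, ha] using h _ (increasingTriple_ne_initialTriple hab hbv hv)
  by_cases hq : qDistinct (a, 0, b, v)
  · obtain ⟨ha₀, hab, -, hb₀, -⟩ := qDistinct_iff_ne.1 hq
    rcases lt_or_gt_of_ne hab with hab | hba
    · exact increasing a b ha₀ hab hb
    · rw [hd.swap_outer, increasing b a hb₀.symm hba ha]
  · exact hd.eq_zero_of_not_qDistinct hq

theorem exists_first_zero_eq_zero_of_basisQuad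
    (h : ∀ t ≠ initialTriple m, d (basisQuad t) = 0) {c v : Fin (m + 3)} (hv : 2 < v)
    (hc : c < v) (hc₀ : c ≠ 0) : ∃ e < v, e ≠ 0 ∧ e ≠ c ∧ d (0, c, e, v) = 0 := by
  have hbasis := h _ (increasingTriple_ne_initialTriple (Fin.pos_of_ne_zero hc₀) hc hv)
  rw [basisQuad_increasingTriple, if_pos rfl] at hbasis
  have one_lt_two : (1 : Fin (m + 3)) < 2 := by
    rw [Fin.lt_def, Fin.val_two, Fin.val_one]
    exact Nat.one_lt_two
  by_cases hc₁ : c = 1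
  · rw [if_pos hc₁] at hbasis
    exact ⟨2, hv, ((Fin.zero_le _).trans_lt one_lt_two).ne', hc₁ ▸ one_lt_two.ne', hbasis⟩
  · rw [if_neg hc₁] at hbasis
    exact ⟨1, one_lt_two.trans hv, Fin.zero_ne_one.symm, Ne.symm hc₁, hbasis⟩

theorem eq_zero_of_basisQuad_eq_zero (hd : IsPentagonal d)
    (h : ∀ t ≠ initialTriple m, d (basisQuad t) = 0) : d = 0 := by
  have last : ∀ v, ∀ a < v, ∀ b < v, ∀ c < v, d (a, b, c, v) = 0 := by
    intro v
    induction v using WellFoundedLT.induction with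
    | ind v ih =>
    intro a ha b hb c hc
    rcases le_or_gt v 2 with hv | hv
    · apply hd.eq_zero_of_not_qDistinct
      have two_val : ((2 : Fin (m + 3)) : ℕ) = 2 := Fin.val_two
      rw [qDistinct_iff_ne]
      omega
    have below : ∀ a < v, ∀ b < v, ∀ c < v, ∀ e < v, d (a, b, c, e) = 0 :=
      fun a ha b hb c hc e he => hd.eq_zero_of_largest_last (s := Set.Iio v) ih ha hb hc he
    exact hd.eq_zero_of_middle_of_first below
      (fun a ha b hb => hd.middle_zero_eq_zero_of_basisQuad h hv ha hb)
      ((Fin.zero_le _).trans_lt hv)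
      (fun c hc hc₀ => exists_first_zero_eq_zero_of_basisQuad h hv hc hc₀) ha hb hc
  funext ⟨i, j, k, l⟩
  exact hd.eq_zero_of_largest_last (s := Set.univ) (fun v _ => last v) trivial trivial trivial
    trivial

theorem mem_span_basisQuad {R : Type*} [Ring R] [Module R A] (hd : IsPentagonal d)
    (q : Quad (m + 3)) :
    d q ∈ Submodule.span R (Set.range fun t : {t // t ≠ initialTriple m} => d (basisQuad t)) := by
  set S := Submodule.span R (Set.range fun t : {t // t ≠ initialTriple m} => d (basisQuad t))
  have h : S.mkQ.toAddMonoidHom ∘ d = 0 := (hd.comp _).eq_zero_of_basisQuad_eq_zero fun t ht =>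
    (Submodule.Quotient.mk_eq_zero S).2 (Submodule.subset_span ⟨⟨t, ht⟩, rfl⟩)
  exact (Submodule.Quotient.mk_eq_zero S).1 (congrFun h q)

end IsPentagonal

/-- The class of the generator `(ijkl)` in the abelianization of `Γ̂_n^4`, written additively. -/
def abelianizedGenerator {n : ℕ} (q : Quad n) : Additive (Abelianization (GammaHat n)) :=
  Additive.ofMul (Abelianization.of (gh q))

section UniversalProperty

variable {n : ℕ} {A : Type*} [AddCommGroup A]

theorem isPentagonal_iff_lift_eq_one {d : Quad n → A} :
    IsPentagonal d ↔
      ∀ r ∈ gammaHatRels n, FreeGroup.lift (fun q => Multiplicative.ofAdd (d q)) r = 1 := by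
  constructor
  · rintro hd r (((⟨q, hq, rfl⟩ | ⟨q, r, -, -, -, rfl⟩) | ⟨i, j, k, l, m, h, rfl⟩) |
      ⟨i, j, k, l, h, rfl | rfl⟩)
    · simp [hd.eq_zero_of_not_qDistinct hq]
    · simp
    · simp [← ofAdd_add, ← ofAdd_neg, hd.pentagon h]
    · simp [hd.rotate h]
    · simp [hd.reverse h]
  · intro h
    refine ⟨fun {q} hq => ?_, fun {i j k l} hq => ?_, fun {i j k l} hq => ?_,
      fun {i j k l m} hq => ?_⟩
    · simpa using h _ (.inl (.inl (.inl ⟨q, hq, rfl⟩)))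
    · have := h _ (.inr ⟨i, j, k, l, hq, .inl rfl⟩)
      simpa [← ofAdd_add, ← eq_neg_iff_add_eq_zero] using this
    · have := h _ (.inr ⟨i, j, k, l, hq, .inr rfl⟩)
      simpa [← ofAdd_add, ← eq_neg_iff_add_eq_zero] using this
    · have := h _ (.inl (.inr ⟨i, j, k, l, m, hq, rfl⟩))
      simp only [map_mul, map_inv, FreeGroup.lift_apply_of, ← ofAdd_add, ← ofAdd_neg,
        ofAdd_eq_one] at this
      rw [← sub_eq_zero, ← this]
      abel

theorem isPentagonal_abelianizedGenerator :
    IsPentagonal (abelianizedGenerator : Quad n → Additive (Abelianization (GammaHat n))) := by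
  rw [isPentagonal_iff_lift_eq_one]
  intro r hr
  have factors : FreeGroup.lift (fun q => Multiplicative.ofAdd (abelianizedGenerator q)) =
      (Abelianization.of.comp (PresentedGroup.mk (gammaHatRels n)) :) := by
    ext q; rfl
  rw [factors]
  exact congrArg Abelianization.of (PresentedGroup.one_of_mem hr)

/-- The homomorphism from the abelianization of `Γ̂_n^4` determined by its values on generators. -/
def IsPentagonal.lift {d : Quad n → A} (hd : IsPentagonal d) :
    Additive (Abelianization (GammaHat n)) →+ A :=
  MonoidHom.toAdditiveLeft
    (Abelianization.lift (PresentedGroup.toGroup (isPentagonal_iff_lift_eq_one.1 hd)))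

theorem IsPentagonal.lift_abelianizedGenerator {d : Quad n → A} (hd : IsPentagonal d) (q : Quad n) :
    hd.lift (abelianizedGenerator q) = d q :=
  congrArg Multiplicative.toAdd (PresentedGroup.toGroup.of (isPentagonal_iff_lift_eq_one.1 hd))

theorem addHom_abelianizedGenerator_ext {f g : Additive (Abelianization (GammaHat n)) →+ A}
    (h : ∀ q, f (abelianizedGenerator q) = g (abelianizedGenerator q)) : f = g := by
  apply MonoidHom.toAdditiveLeft.symm.injective
  ext q
  exact h q

theorem span_range_abelianizedGenerator :
    Submodule.span ℤ (Set.range (abelianizedGenerator (n := n))) = ⊤ := by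
  set S := Submodule.span ℤ (Set.range (abelianizedGenerator (n := n)))
  have h : S.mkQ.toAddMonoidHom = 0 := addHom_abelianizedGenerator_ext fun q =>
    (Submodule.Quotient.mk_eq_zero S).2 (Submodule.subset_span ⟨q, rfl⟩)
  exact Submodule.eq_top_iff'.2 fun x =>
    (Submodule.Quotient.mk_eq_zero S).1 (DFunLike.congr_fun h x)

end UniversalProperty

/-- The difference of the two triangulations of the quadrilateral `ijkl`, where the triangle with
vertex set `s` has weight `e s`. The formula does not vanish at every degenerate quadruple (for
instance if `i = k`), hence the case distinction. -/
def triangulationDifference {n : ℕ} {A : Type*} [AddCommGroup A] (e : Finset (Fin n) → A) :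
    Quad n → A := fun (i, j, k, l) =>
  if qDistinct (i, j, k, l) then e {i, j, k} + e {i, k, l} - e {i, j, l} - e {j, k, l} else 0

section TriangulationDifference

variable {n : ℕ} {A : Type*} [AddCommGroup A] (e : Finset (Fin n) → A)

theorem triangulationDifference_of_qDistinct {i j k l : Fin n} (h : qDistinct (i, j, k, l)) :
    triangulationDifference e (i, j, k, l) =
      e {i, j, k} + e {i, k, l} - e {i, j, l} - e {j, k, l} :=
  if_pos h

theorem isPentagonal_triangulationDifference : IsPentagonal (triangulationDifference e) where
  eq_zero_of_not_qDistinct h := if_neg h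
  rotate {i j k l} h := by
    rw [triangulationDifference_of_qDistinct e h, triangulationDifference_of_qDistinct e h.rotate,
      ← triple_rotate i j k, ← triple_rotate i k l, ← triple_rotate i j l]
    abel
  reverse {i j k l} h := by
    rw [triangulationDifference_of_qDistinct e h, triangulationDifference_of_qDistinct e h.reverse,
      triple_reverse l k j, triple_reverse l j i, triple_reverse l k i, triple_reverse k j i]
    abel
  pentagon {i j k l m} h := by
    obtain ⟨hijkl, him, hjm, hkm, hlm⟩ := card_eq_five_iff_qDistinct.1 h
    obtain ⟨hij, hik, hil, hjk, hjl, hkl⟩ := qDistinct_iff_ne.1 hijkl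
    simp only [triangulationDifference_of_qDistinct, qDistinct_iff_ne, ne_eq, *, not_false_eq_true,
      and_self]
    abel

theorem triangulationDifference_add_swap_middle {i j k l : Fin n} (h : qDistinct (i, j, k, l)) :
    triangulationDifference e (i, j, k, l) + triangulationDifference e (i, k, j, l) =
      (2 : ℕ) • (e {i, j, k} - e {l, j, k}) := by
  rw [triangulationDifference_of_qDistinct e h,
    triangulationDifference_of_qDistinct e h.swap_middle, pair_comm k j, insert_comm k j,
    triple_rotate l j k]
  abel

end TriangulationDifference

section Rank

variable {m : ℕ} {K A : Type*} [Field K] [NeZero (2 : K)] [AddCommGroup A] [Module K A]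
  {e : Finset (Fin (m + 3)) → A}

theorem apply_mem_span_basisQuad_sup_span_singleton {s₀ s : Finset (Fin (m + 3))}
    (hs₀ : #s₀ = 3) (hs : #s = 3) :
    e s ∈ Submodule.span K (Set.range fun t : {t // t ≠ initialTriple m} =>
      triangulationDifference e (basisQuad t)) ⊔ Submodule.span K {e s₀} := by
  set W := Submodule.span K (Set.range fun t : {t // t ≠ initialTriple m} =>
    triangulationDifference e (basisQuad t))
  refine card_exchange_induction (P := fun s => e s ∈ W ⊔ Submodule.span K {e s₀}) ?_ hs₀ hs
    (Submodule.mem_sup_right (Submodule.mem_span_singleton_self _))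
  intro u hu a ha b hb hab hmem
  obtain ⟨j, k, hjk, rfl⟩ := card_eq_two.1 hu
  have hq : qDistinct (a, j, k, b) := by
    simp only [mem_insert, mem_singleton, not_or] at ha hb
    rw [qDistinct_iff_ne]
    tauto
  have mem_W (q) : triangulationDifference e q ∈ W :=
    (isPentagonal_triangulationDifference e).mem_span_basisQuad q
  have double_mem : (2 : K) • (e {a, j, k} - e {b, j, k}) ∈ W := by
    rw [ofNat_smul_eq_nsmul, ← triangulationDifference_add_swap_middle e hq]
    exact W.add_mem (mem_W _) (mem_W _)
  have sub_mem : e {a, j, k} - e {b, j, k} ∈ W := (W.smul_mem_iff two_ne_zero).1 double_mem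
  simpa using Submodule.sub_mem _ hmem (Submodule.mem_sup_left sub_mem)

theorem linearIndependent_triangulationDifference_basisQuad
    (he : LinearIndependent K fun s : {s : Finset (Fin (m + 3)) // #s = 3} => e s) :
    LinearIndependent K fun t : {t // t ≠ initialTriple m} =>
      triangulationDifference e (basisQuad t) := by
  obtain ⟨s₀, -, hs₀⟩ := exists_subset_card_eq (s := (univ : Finset (Fin (m + 3)))) (n := 3)
    (by simp)
  set W := Submodule.span K (Set.range fun t : {t // t ≠ initialTriple m} =>
    triangulationDifference e (basisQuad t))
  have : FiniteDimensional K W := FiniteDimensional.span_of_finite K (Set.finite_range _)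
  have span_le : Submodule.span K (Set.range fun s : {s : Finset (Fin (m + 3)) // #s = 3} => e s) ≤
      W ⊔ Submodule.span K {e s₀} := by
    rw [Submodule.span_le, Set.range_subset_iff]
    exact fun s => apply_mem_span_basisQuad_sup_span_singleton hs₀ s.2
  have choose_le : (m + 3).choose 3 ≤ finrank K W + 1 := calc
    (m + 3).choose 3 = Fintype.card {s : Finset (Fin (m + 3)) // #s = 3} := by
      rw [Fintype.card_finset_len, Fintype.card_fin]
    _ = finrank K (Submodule.span K
          (Set.range fun s : {s : Finset (Fin (m + 3)) // #s = 3} => e s)) :=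
      (finrank_span_eq_card he).symm
    _ ≤ finrank K ↥(W ⊔ Submodule.span K {e s₀}) := Submodule.finrank_mono span_le
    _ ≤ finrank K W + finrank K (Submodule.span K {e s₀}) :=
      Submodule.finrank_add_le_finrank_add_finrank ..
    _ ≤ finrank K W + 1 := by
      gcongr
      simpa using finrank_span_le_card (R := K) {e s₀}
  rw [linearIndependent_iff_card_le_finrank_span, card_ne_initialTriple]
  exact Nat.sub_le_iff_le_add.2 choose_le

end Rank

theorem linearIndependent_abelianizedGenerator_basisQuad (m : ℕ) :
    LinearIndependent ℤ fun t : {t // t ≠ initialTriple m} =>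
      abelianizedGenerator (basisQuad t.1) := by
  let e := Pi.basisFun ℚ (Finset (Fin (m + 3)))
  have independent := (linearIndependent_triangulationDifference_basisQuad
    (e.linearIndependent.comp _ Subtype.val_injective)).restrict_scalars' ℤ
  apply LinearIndependent.of_comp
    (isPentagonal_triangulationDifference e).lift.toIntLinearMap
  simpa only [Function.comp_def, AddMonoidHom.coe_toIntLinearMap,
    IsPentagonal.lift_abelianizedGenerator] using independent

theorem span_abelianizedGenerator_basisQuad (m : ℕ) :
    Submodule.span ℤ (Set.range fun t : {t // t ≠ initialTriple m} =>
      abelianizedGenerator (basisQuad t.1)) = ⊤ := by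
  rw [eq_top_iff, ← span_range_abelianizedGenerator, Submodule.span_le, Set.range_subset_iff]
  exact isPentagonal_abelianizedGenerator.mem_span_basisQuad

/-- The basis of the abelianization of `Γ̂_{m+3}^4` consisting of the generators `basisQuad t`. -/
noncomputable def abelianizationBasis (m : ℕ) :
    Basis {t // t ≠ initialTriple m} ℤ (Additive (Abelianization (GammaHat (m + 3)))) :=
  Basis.mk (linearIndependent_abelianizedGenerator_basisQuad m)
    (span_abelianizedGenerator_basisQuad m).ge

/-- For every `n ≥ 4`, the abelianization of `Γ̂_n^4` is isomorphic to the free abelian group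
`ℤ^{N_n}`, where `N_n = C(n,3) - 1`. -/
theorem gammaHat_abelianization (n : ℕ) (hn : 4 ≤ n) :
    Nonempty (Abelianization (GammaHat n) ≃* Multiplicative (Fin (n.choose 3 - 1) → ℤ)) := by
  obtain ⟨m, rfl⟩ : ∃ m, n = m + 3 := ⟨n - 3, by omega⟩
  let b := (abelianizationBasis m).reindex (Fintype.equivFinOfCardEq (card_ne_initialTriple m))
  exact ⟨AddEquiv.toMultiplicativeRight b.equivFun.toAddEquiv⟩
end

section
/- For every n ≥ 4, every generating set of the group Γ̂_n^4 has at least N_n = C(n,3) − 1 elements; consequently the minimum number of generators of Γ̂_n^4 is exactly N_n. -/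
/-!
Lower bound: regard `(ijkl)` as the flip of the diagonal `ik` of a quadrilateral `ijkl` to `jl`.
The change it makes to the set of triangles defines a homomorphism from `Γ̂_n^4` to the rational
vector space on triangles. The flips `(ijkl)` and `(jikl)` add up to `2 (ijk - ijl)`, so the image
spans all differences of triangles, a space of dimension `C(n,3) - 1`.

Upper bound: by the dihedral relations a generator is, up to inversion, a pair of crossing
diagonals, and a pentagon relation is a 5-cycle of such pairs, four of which generate the fifth.
Suppose that all generators on `t ∪ {m}` and on `t ∪ {q}` are available, and regard the crossings of
`ab` with `qm` as edges `ab` of a graph on `t`. Once `ab` is available, a pentagon on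
`a, b, c, q, m` shows that `ac` is available if and only if the crossing of `bq` with `cm` is.
Hence a star on `t` with one further edge generates everything on `t ∪ {q, m}`, at the cost of
`#t` generators, if `#t ≥ 3`; if `#t = 2`, three generators are needed. Summing over `q` and then
over `m` gives `C(n,3) - 1`.
-/

section General

open Finset Module

theorem card_toFinset_eq_length_iff_nodup {α : Type*} [DecidableEq α] {l : List α} :
    #l.toFinset = l.length ↔ l.Nodup :=
  Multiset.toFinset_card_eq_card_iff_nodup (m := (l : Multiset α))

theorem length_le_card_of_nodup {α : Type*} {l : List α} {s : Finset α}
    (hl : l.Nodup) (hs : ∀ x ∈ l, x ∈ s) : l.length ≤ #s := by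
  classical
  rw [← card_toFinset_eq_length_iff_nodup.mpr hl]
  exact card_le_card fun x hx => hs x (List.mem_toFinset.mp hx)

theorem eq_of_exchange_invariant {α β : Type*} [DecidableEq α] {f : Finset α → β} {k : ℕ}
    (hf : ∀ A : Finset α, #A = k → ∀ x ∉ A, ∀ y ∉ A, f (insert x A) = f (insert y A))
    {s t : Finset α} (hs : #s = k + 1) (ht : #t = k + 1) : f s = f t := by
  induction hd : #(s \ t) generalizing s with
  | zero =>
    have hst : s ⊆ t := by rwa [card_eq_zero, sdiff_eq_empty_iff_subset] at hd
    rw [eq_of_subset_of_card_le hst (by lia)]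
  | succ d ih =>
    obtain ⟨x, hx⟩ : (s \ t).Nonempty := card_pos.mp (by lia)
    obtain ⟨y, hy⟩ : (t \ s).Nonempty :=
      card_pos.mp (by rw [card_sdiff_comm (by lia : #t = #s)]; lia)
    have hxs := mem_sdiff.mp hx
    have hyt := mem_sdiff.mp hy
    have hA : #(s.erase x) = k := by rw [card_erase_of_mem hxs.1, hs, Nat.add_sub_cancel]
    have hyA : y ∉ s.erase x := fun h => hyt.2 (mem_of_mem_erase h)
    have hcloser : insert y (s.erase x) \ t = (s \ t).erase x := by
      rw [insert_sdiff_of_mem _ hyt.1, erase_sdiff_comm]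
    calc f s = f (insert x (s.erase x)) := by rw [insert_erase hxs.1]
      _ = f (insert y (s.erase x)) := hf _ hA x (notMem_erase x s) y hyA
      _ = f t := ih (by rw [card_insert_of_notMem hyA, hA])
        (by rw [hcloser, card_erase_of_mem hx, hd, Nat.add_sub_cancel])

theorem card_le_finrank_add_one_of_sub_mem {K V ι : Type*} [DivisionRing K] [AddCommGroup V]
    [Module K V] {v : ι → V} {s : Finset ι} (hv : LinearIndepOn K v (s : Set ι))
    (W : Submodule K V) [FiniteDimensional K W]
    (hW : ∀ i ∈ s, ∀ j ∈ s, v i - v j ∈ W) : #s ≤ finrank K W + 1 := by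
  obtain rfl | ⟨i, hi⟩ := s.eq_empty_or_nonempty
  · simp
  let v' : s → V := fun j => v j
  have hspan : Submodule.span K (Set.range v') ≤ W ⊔ Submodule.span K {v i} := by
    rw [Submodule.span_le]
    rintro _ ⟨j, rfl⟩
    exact Submodule.mem_sup.mpr
      ⟨_, hW j j.2 i hi, _, Submodule.mem_span_singleton_self _, sub_add_cancel _ _⟩
  calc #s = finrank K (Submodule.span K (Set.range v')) := by
        rw [finrank_span_eq_card (b := v') hv, Fintype.card_coe]
    _ ≤ finrank K ↥(W ⊔ Submodule.span K {v i}) := Submodule.finrank_mono hspan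
    _ ≤ finrank K W + finrank K (Submodule.span K {v i}) :=
        Submodule.finrank_add_le_finrank_add_finrank _ _
    _ ≤ finrank K W + 1 := by
        gcongr
        simpa using finrank_span_le_card (R := K) {v i}

theorem finrank_span_range_le_ncard {G K V : Type*} [Group G] [DivisionRing K] [AddCommGroup V]
    [Module K V] (φ : G →* Multiplicative V) {S : Set G} (hfin : S.Finite)
    (hS : Subgroup.closure S = ⊤) :
    finrank K (Submodule.span K (Set.range fun g => (φ g).toAdd)) ≤ S.ncard := by
  let T : Set V := (fun g => (φ g).toAdd) '' S
  have hT : T.Finite := hfin.image _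
  have hrange : Set.range (fun g => (φ g).toAdd) ⊆ Submodule.span K T := by
    have hle : Subgroup.closure S ≤
        (AddSubgroup.toSubgroup (Submodule.span K T).toAddSubgroup).comap φ :=
      (Subgroup.closure_le _).mpr fun g hg => Submodule.subset_span (Set.mem_image_of_mem _ hg)
    rintro _ ⟨g, rfl⟩
    exact hle (hS ▸ Subgroup.mem_top g)
  have : Fintype T := hT.fintype
  have : FiniteDimensional K (Submodule.span K T) := .span_of_finite K hT
  calc finrank K (Submodule.span K (Set.range fun g => (φ g).toAdd))
      ≤ finrank K (Submodule.span K T) :=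
        Submodule.finrank_mono (Submodule.span_le.mpr hrange)
    _ ≤ T.ncard := (finrank_span_le_card T).trans_eq (Set.ncard_eq_toFinset_card' T).symm
    _ ≤ S.ncard := Set.ncard_image_le hfin

theorem forall_ne_of_star_of_edge {α : Type*} {t : Set α} {X Y : α → α → Prop}
    (symm : ∀ a b, X a b → X b a)
    (path : ∀ a ∈ t, ∀ b ∈ t, ∀ c ∈ t, a ≠ b → a ≠ c → b ≠ c → X a b → (X a c ↔ Y b c))
    {u v w : α} (hu : u ∈ t) (hv : v ∈ t) (hw : w ∈ t) (huv : u ≠ v) (huw : u ≠ w) (hvw : v ≠ w)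
    (star : ∀ r ∈ t, r ≠ u → X u r) (edge : X v w) :
    ∀ a ∈ t, ∀ b ∈ t, a ≠ b → X a b ∧ Y a b := by
  have hY : ∀ b ∈ t, ∀ c ∈ t, b ≠ u → c ≠ u → b ≠ c → Y b c := fun b hb c hc hbu hcu hbc =>
    (path u hu b hb c hc hbu.symm hcu.symm hbc (star b hb hbu)).mp (star c hc hcu)
  have hXv : ∀ c ∈ t, c ≠ v → X v c := by
    intro c hc hcv
    obtain rfl | hcu := eq_or_ne c u
    · exact symm _ _ (star v hv hcv.symm)
    obtain rfl | hcw := eq_or_ne c w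
    · exact edge
    exact (path v hv w hw c hc hvw hcv.symm hcw.symm edge).mpr
      (hY w hw c hc huw.symm hcu hcw.symm)
  have hX : ∀ a ∈ t, ∀ b ∈ t, a ≠ b → X a b := by
    intro a ha b hb hab
    obtain rfl | hbu := eq_or_ne b u
    · exact symm _ _ (star a ha hab)
    obtain rfl | hav := eq_or_ne a v
    · exact hXv b hb hab.symm
    obtain rfl | hbv := eq_or_ne b v
    · exact symm _ _ (hXv a ha hab)
    exact (path a ha v hv b hb hav hab hbv.symm (symm _ _ (hXv a ha hav))).mpr
      (hY v hv b hb huv.symm hbu hbv.symm)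
  intro b hb c hc hbc
  obtain ⟨a, ha, hab, hac⟩ : ∃ a ∈ t, a ≠ b ∧ a ≠ c := by grind
  exact ⟨hX b hb c hc hbc,
    (path a ha b hb c hc hab hac hbc (hX a ha b hb hab)).mp (hX a ha c hc hac)⟩

end General

namespace GammaHat

open Finset Module

variable {n : ℕ}

theorem qDistinct_iff_nodup {i j k l : Fin n} : qDistinct (i, j, k, l) ↔ [i, j, k, l].Nodup := by
  rw [← card_toFinset_eq_length_iff_nodup]
  simp [qDistinct, qFinset]

theorem card_eq_five_iff_nodup {i j k l m : Fin n} :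
    #{i, j, k, l, m} = 5 ↔ [i, j, k, l, m].Nodup := by
  rw [← card_toFinset_eq_length_iff_nodup]
  simp

/-- The class of a triangle, as a basis vector of the rational functions on sets of vertices. -/
def triangle (T : Finset (Fin n)) : Finset (Fin n) → ℚ := Pi.single T 1

/-- The change in the triangulation of a quadrilateral with cyclically ordered vertices `i, j, k, l`
when its diagonal `ik` is replaced by `jl`. -/
def flipVector (i j k l : Fin n) : Finset (Fin n) → ℚ :=
  triangle {i, j, k} + triangle {i, k, l} - triangle {j, k, l} - triangle {i, j, l}

theorem triangle_rotate (i j k : Fin n) : triangle {i, j, k} = triangle {k, i, j} := by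
  rw [Finset.insert_comm k i, Finset.pair_comm k j]

theorem triangle_reverse (i j k : Fin n) : triangle {i, j, k} = triangle {k, j, i} := by
  rw [triangle_rotate, Finset.pair_comm i j]

theorem flipVector_add_rotate (i j k l : Fin n) :
    flipVector i j k l + flipVector j k l i = 0 := by
  rw [flipVector, flipVector, triangle_rotate j l i, triangle_rotate k l i, triangle_rotate j k i]
  abel

theorem flipVector_add_reverse (i j k l : Fin n) :
    flipVector i j k l + flipVector l k j i = 0 := by
  rw [flipVector, flipVector, triangle_reverse l k j, triangle_reverse l j i,
    triangle_reverse k j i, triangle_reverse l k i]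
  abel

theorem flipVector_pentagon (i j k l m : Fin n) :
    flipVector i j k l + flipVector i j l m + flipVector j k l m + -flipVector i j k m
      + -flipVector i k l m = 0 := by
  simp only [flipVector]
  abel

theorem flipVector_add_swap (i j k l : Fin n) :
    flipVector i j k l + flipVector j i k l
      = (2 : ℚ) • (triangle {i, j, k} - triangle {i, j, l}) := by
  simp only [flipVector, Finset.insert_comm j i]
  module

open Classical in
/-- The values on the generators of the homomorphism `flipHom`. -/
noncomputable def flipValue (q : Quad n) : Multiplicative (Finset (Fin n) → ℚ) :=
  if qDistinct q then .ofAdd (flipVector q.1 q.2.1 q.2.2.1 q.2.2.2) else 1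

theorem flipValue_of_nodup {i j k l : Fin n} (h : [i, j, k, l].Nodup) :
    flipValue (i, j, k, l) = .ofAdd (flipVector i j k l) :=
  if_pos (qDistinct_iff_nodup.mpr h)

theorem lift_flipValue_eq_one : ∀ r ∈ gammaHatRels n, FreeGroup.lift flipValue r = 1 := by
  rintro r (((⟨q, hq, rfl⟩ | ⟨q, s, -, -, -, rfl⟩) | ⟨i, j, k, l, m, h, rfl⟩) |
    ⟨i, j, k, l, h, rfl | rfl⟩)
  · simp [flipValue, hq]
  · simp
  · rw [card_eq_five_iff_nodup] at h
    simp only [map_mul, map_inv, FreeGroup.lift_apply_of]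
    iterate 5 rw [flipValue_of_nodup (by grind)]
    exact congrArg Multiplicative.ofAdd (flipVector_pentagon i j k l m)
  · rw [qDistinct_iff_nodup] at h
    rw [map_mul, FreeGroup.lift_apply_of, FreeGroup.lift_apply_of, flipValue_of_nodup h,
      flipValue_of_nodup (by grind)]
    exact congrArg Multiplicative.ofAdd (flipVector_add_rotate i j k l)
  · rw [qDistinct_iff_nodup] at h
    rw [map_mul, FreeGroup.lift_apply_of, FreeGroup.lift_apply_of, flipValue_of_nodup h,
      flipValue_of_nodup (by grind)]
    exact congrArg Multiplicative.ofAdd (flipVector_add_reverse i j k l)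

/-- The homomorphism sending each generator `(ijkl)` to the flip vector of `i, j, k, l`. -/
noncomputable def flipHom (n : ℕ) : GammaHat n →* Multiplicative (Finset (Fin n) → ℚ) :=
  PresentedGroup.toGroup lift_flipValue_eq_one

theorem toAdd_flipHom_gh {i j k l : Fin n} (h : [i, j, k, l].Nodup) :
    (flipHom n (gh (i, j, k, l))).toAdd = flipVector i j k l := by
  rw [gh, flipHom, PresentedGroup.toGroup.of, flipValue_of_nodup h, toAdd_ofAdd]

/-- The rational span of the image of `flipHom`. -/
noncomputable def flipSpan (n : ℕ) : Submodule ℚ (Finset (Fin n) → ℚ) :=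
  Submodule.span ℚ (Set.range fun g => (flipHom n g).toAdd)

theorem flipVector_mem_flipSpan {i j k l : Fin n} (h : [i, j, k, l].Nodup) :
    flipVector i j k l ∈ flipSpan n :=
  Submodule.subset_span ⟨gh (i, j, k, l), toAdd_flipHom_gh h⟩

theorem triangle_sub_triangle_mem_of_common_edge {i j k l : Fin n} (h : [i, j, k, l].Nodup) :
    triangle {i, j, k} - triangle {i, j, l} ∈ flipSpan n := by
  have hsum : (2 : ℚ) • (triangle {i, j, k} - triangle {i, j, l}) ∈ flipSpan n := by
    rw [← flipVector_add_swap]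
    exact add_mem (flipVector_mem_flipSpan h) (flipVector_mem_flipSpan (by grind))
  exact ((flipSpan n).smul_mem_iff two_ne_zero).mp hsum

theorem triangle_sub_triangle_mem {s t : Finset (Fin n)} (hs : #s = 3) (ht : #t = 3) :
    triangle s - triangle t ∈ flipSpan n := by
  have hexchange : ∀ A : Finset (Fin n), #A = 2 → ∀ x ∉ A, ∀ y ∉ A,
      (flipSpan n).mkQ (triangle (insert x A)) = (flipSpan n).mkQ (triangle (insert y A)) := by
    intro A hA x hx y hy
    obtain rfl | hxy := eq_or_ne x y
    · rfl
    obtain ⟨i, j, hij, rfl⟩ := card_eq_two.mp hA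
    have hnodup : [i, j, x, y].Nodup := by grind
    rw [← triangle_rotate i j x, ← triangle_rotate i j y]
    exact (Submodule.Quotient.eq _).mpr (triangle_sub_triangle_mem_of_common_edge hnodup)
  exact (Submodule.Quotient.eq _).mp
    (eq_of_exchange_invariant (f := fun T => (flipSpan n).mkQ (triangle T)) hexchange hs ht)

theorem choose_three_le_ncard_add_one {S : Set (GammaHat n)} (hfin : S.Finite)
    (hS : Subgroup.closure S = ⊤) : n.choose 3 ≤ S.ncard + 1 :=
  calc n.choose 3 = #(powersetCard 3 (univ : Finset (Fin n))) := by simp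
    _ ≤ finrank ℚ (flipSpan n) + 1 :=
        card_le_finrank_add_one_of_sub_mem
          ((Pi.linearIndependent_single_one (Finset (Fin n)) ℚ).linearIndepOn _) _
          fun s hs t ht => triangle_sub_triangle_mem (mem_powersetCard_univ.mp hs)
            (mem_powersetCard_univ.mp ht)
    _ ≤ S.ncard + 1 := Nat.add_le_add_right (finrank_span_range_le_ncard _ hfin hS) 1

theorem gh_eq_one_of_not_qDistinct {q : Quad n} (h : ¬ qDistinct q) : gh q = 1 :=
  PresentedGroup.one_of_mem (Or.inl (Or.inl (Or.inl ⟨q, h, rfl⟩)))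

theorem gh_rotate (i j k l : Fin n) : gh (i, j, k, l) = (gh (j, k, l, i))⁻¹ := by
  by_cases h : qDistinct (i, j, k, l)
  · exact eq_inv_of_mul_eq_one_left
      (PresentedGroup.one_of_mem (Or.inr ⟨i, j, k, l, h, Or.inl rfl⟩))
  · have h' : ¬ qDistinct (j, k, l, i) := by rw [qDistinct_iff_nodup] at h ⊢; grind
    rw [gh_eq_one_of_not_qDistinct h, gh_eq_one_of_not_qDistinct h', inv_one]

theorem gh_reverse (i j k l : Fin n) : gh (i, j, k, l) = (gh (l, k, j, i))⁻¹ := by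
  by_cases h : qDistinct (i, j, k, l)
  · exact eq_inv_of_mul_eq_one_left
      (PresentedGroup.one_of_mem (Or.inr ⟨i, j, k, l, h, Or.inr rfl⟩))
  · have h' : ¬ qDistinct (l, k, j, i) := by rw [qDistinct_iff_nodup] at h ⊢; grind
    rw [gh_eq_one_of_not_qDistinct h, gh_eq_one_of_not_qDistinct h', inv_one]

theorem gh_pentagon {i j k l m : Fin n} (h : [i, j, k, l, m].Nodup) :
    gh (i, j, k, l) * gh (i, j, l, m) * gh (j, k, l, m) = gh (i, k, l, m) * gh (i, j, k, m) := by
  have hrel : gh (i, j, k, l) * gh (i, j, l, m) * gh (j, k, l, m) * (gh (i, j, k, m))⁻¹ *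
      (gh (i, k, l, m))⁻¹ = 1 :=
    PresentedGroup.one_of_mem
      (Or.inl (Or.inr ⟨i, j, k, l, m, card_eq_five_iff_nodup.mpr h, rfl⟩))
  rwa [mul_inv_eq_one, mul_inv_eq_iff_eq_mul] at hrel

/-- The generator `(acbd)`, indexed by the crossing diagonals `ab` and `cd` of its quadrilateral.
It depends only on the two unordered diagonals, and exchanging them inverts it. -/
def diagFlip (a b c d : Fin n) : GammaHat n := gh (a, c, b, d)

theorem diagFlip_swap_left (a b c d : Fin n) : diagFlip b a c d = diagFlip a b c d := by
  rw [diagFlip, diagFlip, gh_reverse, gh_rotate, inv_inv]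

theorem diagFlip_exchange (a b c d : Fin n) : diagFlip c d a b = (diagFlip a b c d)⁻¹ := by
  rw [← diagFlip_swap_left, diagFlip, diagFlip, gh_rotate]

theorem diagFlip_swap_right (a b c d : Fin n) : diagFlip a b d c = diagFlip a b c d := by
  rw [diagFlip_exchange d c, diagFlip_swap_left, ← diagFlip_exchange]

variable {H K : Subgroup (GammaHat n)}

theorem diagFlip_exchange_mem {a b c d : Fin n} (h : diagFlip a b c d ∈ H) :
    diagFlip c d a b ∈ H := by
  rw [diagFlip_exchange]
  exact inv_mem h

/-- The five crossings of diagonals in the pentagon relation form a cycle `ik, jl, km, il, jm`. -/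
theorem diagFlip_mem_of_pentagon {i j k l m : Fin n} (h : [i, j, k, l, m].Nodup)
    (hik_jl : diagFlip i k j l ∈ H) (hjl_km : diagFlip j l k m ∈ H)
    (hkm_il : diagFlip k m i l ∈ H) (hil_jm : diagFlip i l j m ∈ H) :
    diagFlip j m i k ∈ H := by
  have hpent : diagFlip i k j l * diagFlip i l j m * diagFlip j l k m =
      diagFlip i l k m * diagFlip i k j m := gh_pentagon h
  have hprod : diagFlip i l k m * diagFlip i k j m ∈ H :=
    hpent ▸ mul_mem (mul_mem hik_jl hil_jm) hjl_km
  exact diagFlip_exchange_mem ((H.mul_mem_cancel_left (diagFlip_exchange_mem hkm_il)).mp hprod)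

/-- The subgroup `H` contains all generators of `Γ̂_n^4` with entries in `s`. -/
def ContainsFlips (H : Subgroup (GammaHat n)) (s : Finset (Fin n)) : Prop :=
  ∀ a ∈ s, ∀ b ∈ s, ∀ c ∈ s, ∀ d ∈ s, [a, b, c, d].Nodup → diagFlip a b c d ∈ H

/-- The subgroup `H` contains all generators of `Γ̂_n^4` with one entry equal to `m` and the
others in `t`; by the symmetries of `diagFlip` it is enough to have `m` in the last place. -/
def ContainsFlipsAt (H : Subgroup (GammaHat n)) (m : Fin n) (t : Finset (Fin n)) : Prop :=
  ∀ a ∈ t, ∀ b ∈ t, ∀ c ∈ t, [a, b, c].Nodup → diagFlip a b c m ∈ H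

variable {s t : Finset (Fin n)} {m q : Fin n}

theorem ContainsFlips.mono (h : ContainsFlips H s) (hHK : H ≤ K) (hts : t ⊆ s) :
    ContainsFlips K t :=
  fun a ha b hb c hc d hd hnodup => hHK (h a (hts ha) b (hts hb) c (hts hc) d (hts hd) hnodup)

theorem ContainsFlipsAt.mono (h : ContainsFlipsAt H m t) (hHK : H ≤ K) : ContainsFlipsAt K m t :=
  fun a ha b hb c hc hnodup => hHK (h a ha b hb c hc hnodup)

theorem containsFlips_of_card_lt (hs : #s < 4) : ContainsFlips H s :=
  fun _ ha _ hb _ hc _ hd hnodup =>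
    absurd (length_le_card_of_nodup hnodup (by simp [ha, hb, hc, hd])) hs.not_ge

theorem containsFlipsAt_of_card_lt (ht : #t < 3) : ContainsFlipsAt H m t :=
  fun _ ha _ hb _ hc hnodup =>
    absurd (length_le_card_of_nodup hnodup (by simp [ha, hb, hc])) ht.not_ge

protected theorem ContainsFlips.insert (hs : ContainsFlips H s) (hm : ContainsFlipsAt H m s) :
    ContainsFlips H (insert m s) := by
  intro a ha b hb c hc d hd hnodup
  obtain rfl | has := mem_insert.mp ha
  · rw [← diagFlip_swap_left]
    exact diagFlip_exchange_mem (hm c (by grind) d (by grind) b (by grind) (by grind))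
  obtain rfl | hbs := mem_insert.mp hb
  · exact diagFlip_exchange_mem (hm c (by grind) d (by grind) a has (by grind))
  obtain rfl | hcs := mem_insert.mp hc
  · rw [← diagFlip_swap_right]
    exact hm a has b hbs d (by grind) (by grind)
  obtain rfl | hds := mem_insert.mp hd
  · exact hm a has b hbs c hcs (by grind)
  exact hs a has b hbs c hcs d hds hnodup

protected theorem ContainsFlipsAt.insert (ht : ContainsFlipsAt H m t)
    (hq : ∀ a ∈ t, ∀ b ∈ t, a ≠ b → diagFlip a b q m ∈ H ∧ diagFlip a q b m ∈ H) :
    ContainsFlipsAt H m (insert q t) := by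
  intro a ha b hb c hc hnodup
  obtain rfl | hat := mem_insert.mp ha
  · rw [← diagFlip_swap_left]
    exact (hq b (by grind) c (by grind) (by grind)).2
  obtain rfl | hbt := mem_insert.mp hb
  · exact (hq a hat c (by grind) (by grind)).2
  obtain rfl | hct := mem_insert.mp hc
  · exact (hq a hat b hbt (by grind)).1
  exact ht a hat b hbt c hct hnodup

/-- The pentagon cycle here is `cm, ab, qm, ac, bq`. -/
theorem diagFlip_mem_iff_of_mem (ht : ContainsFlipsAt H m t) (hqt : ContainsFlips H (insert q t))
    (hq : q ∉ t) (hm : m ∉ insert q t) {a b c : Fin n} (ha : a ∈ t) (hb : b ∈ t) (hc : c ∈ t)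
    (hnodup : [a, b, c].Nodup) (hab : diagFlip a b q m ∈ H) :
    diagFlip a c q m ∈ H ↔ diagFlip b q c m ∈ H := by
  have hfive : [a, b, c, q, m].Nodup := by grind
  have hab_cm : diagFlip a b c m ∈ H := ht a ha b hb c hc hnodup
  have hac_bq : diagFlip a c b q ∈ H :=
    hqt a (by grind) c (by grind) b (by grind) q (by grind) (by grind)
  constructor
  · intro hac
    refine diagFlip_mem_of_pentagon (i := c) (j := b) (k := m) (l := a) (m := q) (by grind)
      ?_ ?_ ?_ ?_
    · rw [diagFlip_swap_right]
      exact diagFlip_exchange_mem hab_cm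
    · rwa [diagFlip_swap_left, diagFlip_swap_right]
    · rw [diagFlip_swap_left, diagFlip_swap_right]
      exact diagFlip_exchange_mem hac
    · rwa [diagFlip_swap_left]
  · intro hbq
    refine diagFlip_exchange_mem (diagFlip_mem_of_pentagon (l := b) (by grind) ?_ ?_ ?_ hab)
    · rwa [diagFlip_swap_right]
    · rwa [diagFlip_swap_left]
    · exact diagFlip_exchange_mem hab_cm

/-- A star and one further edge form a connected non-bipartite graph on `t`, so
`diagFlip_mem_iff_of_mem` propagates membership along its walks to all pairs. -/
theorem ContainsFlipsAt.insert_of_star_of_edge (ht : ContainsFlipsAt H m t)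
    (hqt : ContainsFlips H (insert q t)) (hq : q ∉ t) (hm : m ∉ insert q t) {u v w : Fin n}
    (hu : u ∈ t) (hv : v ∈ t) (hw : w ∈ t) (huv : u ≠ v) (huw : u ≠ w) (hvw : v ≠ w)
    (star : ∀ r ∈ t, r ≠ u → diagFlip u r q m ∈ H) (edge : diagFlip v w q m ∈ H) :
    ContainsFlipsAt H m (insert q t) := by
  refine ht.insert (forall_ne_of_star_of_edge (t := t) (X := fun a b => diagFlip a b q m ∈ H)
    (Y := fun b c => diagFlip b q c m ∈ H) ?_ ?_ hu hv hw huv huw hvw star edge)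
  · intro a b hab
    rwa [diagFlip_swap_left]
  · intro a ha b hb c hc hab hac hbc
    exact diagFlip_mem_iff_of_mem ht hqt hq hm ha hb hc (by simp [hab, hac, hbc])

variable {F₀ : Finset (GammaHat n)}

theorem exists_containsFlipsAt_insert_of_card_eq_two (m q : Fin n) (F₀ : Finset (GammaHat n))
    (ht : #t = 2) :
    ∃ F : Finset (GammaHat n), F₀ ⊆ F ∧ #F ≤ #F₀ + 3 ∧
      ContainsFlipsAt (Subgroup.closure F) m (insert q t) := by
  classical
  obtain ⟨u, v, huv, rfl⟩ := card_eq_two.mp ht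
  let G : Finset (GammaHat n) := {diagFlip u v q m, diagFlip u q v m, diagFlip v q u m}
  have hG : ∀ g ∈ G, g ∈ Subgroup.closure ((F₀ ∪ G : Finset _) : Set (GammaHat n)) :=
    fun g hg => Subgroup.subset_closure (mem_coe.mpr (mem_union_right _ hg))
  refine ⟨F₀ ∪ G, subset_union_left, ?_, (containsFlipsAt_of_card_lt (by lia)).insert ?_⟩
  · exact (card_union_le _ _).trans (Nat.add_le_add_left card_le_three _)
  intro a ha b hb hab
  obtain ⟨rfl, rfl⟩ | ⟨rfl, rfl⟩ : a = u ∧ b = v ∨ a = v ∧ b = u := by grind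
  · exact ⟨hG _ (by simp [G]), hG _ (by simp [G])⟩
  · exact ⟨hG _ (by simp [G, diagFlip_swap_left a b]), hG _ (by simp [G])⟩

theorem exists_containsFlipsAt_insert_of_two_lt_card
    (ht : ContainsFlipsAt (Subgroup.closure (F₀ : Set (GammaHat n))) m t)
    (hqt : ContainsFlips (Subgroup.closure (F₀ : Set (GammaHat n))) (insert q t))
    (hq : q ∉ t) (hm : m ∉ insert q t) (hcard : 2 < #t) :
    ∃ F : Finset (GammaHat n), F₀ ⊆ F ∧ #F ≤ #F₀ + #t ∧
      ContainsFlipsAt (Subgroup.closure F) m (insert q t) := by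
  classical
  obtain ⟨u, v, w, hu, hv, hw, huv, huw, hvw⟩ := two_lt_card_iff.mp hcard
  let star : Finset (GammaHat n) := (t.erase u).image fun r => diagFlip u r q m
  let F : Finset (GammaHat n) := F₀ ∪ insert (diagFlip v w q m) star
  have hmem : ∀ g ∈ insert (diagFlip v w q m) star, g ∈ Subgroup.closure (F : Set (GammaHat n)) :=
    fun g hg => Subgroup.subset_closure (mem_coe.mpr (mem_union_right _ hg))
  have hle : Subgroup.closure (F₀ : Set (GammaHat n)) ≤ Subgroup.closure F :=
    Subgroup.closure_mono (coe_subset.mpr subset_union_left)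
  have hstar : #star + 1 ≤ #t := by
    rw [← card_erase_add_one hu]
    exact Nat.add_le_add_right card_image_le 1
  refine ⟨F, subset_union_left, ?_, ?_⟩
  · exact (card_union_le _ _).trans
      (Nat.add_le_add_left ((card_insert_le _ _).trans hstar) _)
  · refine (ht.mono hle).insert_of_star_of_edge (hqt.mono hle subset_rfl) hq hm hu hv hw huv huw hvw
      (fun r hr hru => hmem _ (mem_insert_of_mem ?_)) (hmem _ (mem_insert_self _ _))
    exact mem_image_of_mem _ (mem_erase.mpr ⟨hru, hr⟩)

theorem exists_containsFlipsAt_of_containsFlips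
    (hs : ContainsFlips (Subgroup.closure (F₀ : Set (GammaHat n))) s) (hm : m ∉ s)
    (hts : t ⊆ s) :
    ∃ F : Finset (GammaHat n), F₀ ⊆ F ∧ #F ≤ #F₀ + (#t).choose 2 ∧
      ContainsFlipsAt (Subgroup.closure F) m t := by
  induction t using Finset.induction with
  | empty => exact ⟨F₀, subset_rfl, Nat.le_add_right _ _, containsFlipsAt_of_card_lt (by simp)⟩
  | insert q t hq ih =>
    have hchoose : (#(insert q t)).choose 2 = #t + (#t).choose 2 := by
      rw [card_insert_of_notMem hq, Nat.choose_succ_succ', Nat.choose_one_right]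
    obtain hlt | heq | hgt := lt_trichotomy #t 2
    · exact ⟨F₀, subset_rfl, Nat.le_add_right _ _,
        containsFlipsAt_of_card_lt (by rw [card_insert_of_notMem hq]; lia)⟩
    · rw [hchoose, heq]
      exact exists_containsFlipsAt_insert_of_card_eq_two m q F₀ heq
    · obtain ⟨F, hF₀, hF, hFm⟩ := ih ((subset_insert q t).trans hts)
      have hle : Subgroup.closure (F₀ : Set (GammaHat n)) ≤ Subgroup.closure F :=
        Subgroup.closure_mono (coe_subset.mpr hF₀)
      obtain ⟨F', hFF', hF', hF'm⟩ := exists_containsFlipsAt_insert_of_two_lt_card hFm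
        (hs.mono hle hts) hq (fun h => hm (hts h)) hgt
      exact ⟨F', hF₀.trans hFF', by lia, hF'm⟩

theorem exists_containsFlips (s : Finset (Fin n)) :
    ∃ F : Finset (GammaHat n), #F ≤ (#s).choose 3 - 1 ∧ ContainsFlips (Subgroup.closure F) s := by
  induction s using Finset.induction with
  | empty => exact ⟨∅, by simp, containsFlips_of_card_lt (by simp)⟩
  | insert m s hm ih =>
    obtain hlt | hge := lt_or_ge #s 3
    · exact ⟨∅, by simp, containsFlips_of_card_lt (by rw [card_insert_of_notMem hm]; lia)⟩
    obtain ⟨F₀, hF₀, hs⟩ := ih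
    obtain ⟨F, hF₀F, hF, hFm⟩ := exists_containsFlipsAt_of_containsFlips hs hm subset_rfl
    have hchoose : (#(insert m s)).choose 3 = (#s).choose 2 + (#s).choose 3 := by
      rw [card_insert_of_notMem hm, Nat.choose_succ_succ']
    have hpos : 0 < (#s).choose 3 := Nat.choose_pos hge
    refine ⟨F, by lia, ContainsFlips.insert (hs.mono ?_ subset_rfl) hFm⟩
    exact Subgroup.closure_mono (coe_subset.mpr hF₀F)

theorem eq_top_of_containsFlips_univ (h : ContainsFlips H univ) : H = ⊤ := by
  rw [eq_top_iff, ← PresentedGroup.closure_range_of (gammaHatRels n), Subgroup.closure_le]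
  rintro _ ⟨⟨i, j, k, l⟩, rfl⟩
  change gh (i, j, k, l) ∈ H
  by_cases hq : qDistinct (i, j, k, l)
  · rw [qDistinct_iff_nodup] at hq
    exact h i (mem_univ i) k (mem_univ k) j (mem_univ j) l (mem_univ l) (by grind)
  · rw [gh_eq_one_of_not_qDistinct hq]
    exact one_mem H

theorem exists_card_le_closure_eq_top (n : ℕ) :
    ∃ F : Finset (GammaHat n), #F ≤ n.choose 3 - 1 ∧
      Subgroup.closure (F : Set (GammaHat n)) = ⊤ := by
  obtain ⟨F, hF, hflips⟩ := exists_containsFlips (univ : Finset (Fin n))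
  exact ⟨F, by simpa using hF, eq_top_of_containsFlips_univ hflips⟩

end GammaHat

/-- For every `n ≥ 4`, every generating set of `Γ̂_n^4` has at least `N_n = C(n,3) - 1`
elements (an infinite generating set certainly does, so it suffices to consider finite ones);
consequently, since some generating set with exactly `N_n` elements exists, the minimum
number of generators of `Γ̂_n^4` is exactly `N_n`. -/
theorem gammaHat_min_generators (n : ℕ) (hn : 4 ≤ n) :
    (∀ S : Set (GammaHat n), S.Finite → Subgroup.closure S = ⊤ →
      n.choose 3 - 1 ≤ S.ncard) ∧
    (∃ S : Set (GammaHat n), S.Finite ∧ Subgroup.closure S = ⊤ ∧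
      S.ncard = n.choose 3 - 1) := by
  have lower : ∀ S : Set (GammaHat n), S.Finite → Subgroup.closure S = ⊤ →
      n.choose 3 - 1 ≤ S.ncard := fun _ hfin hS =>
    Nat.sub_le_of_le_add (GammaHat.choose_three_le_ncard_add_one hfin hS)
  obtain ⟨F, hF, hgen⟩ := GammaHat.exists_card_le_closure_eq_top n
  refine ⟨lower, F, F.finite_toSet, hgen, le_antisymm ?_ (lower F F.finite_toSet hgen)⟩
  rwa [Set.ncard_coe_finset]
end

section
/- The map sending each generator (ijkl) of Γ_5^4 to 1 ∈ ℤ/2ℤ if 1 ∈ {i,j,k,l} and to 0 otherwise extends to a well-defined group homomorphism ν : Γ_5^4 → ℤ/2ℤ, and the abelianization of the kernel of ν is isomorphic to ℤ² ⊕ (ℤ/2ℤ)^6; in particular, the abelianization of Ker ν has a ℤ-direct summand. -/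
/-- The defining relators of the group `Γ_n^4` of Kim–Manturov:
generators indexed by quadruples of distinct elements (non-distinct quadruples are killed),
involutive relations (1), commutativity relations (2), pentagon relations (3) and dihedral
relations (4). -/
def gammaRels (n : ℕ) : Set (FreeGroup (Quad n)) :=
  {w | ∃ q : Quad n, ¬ qDistinct q ∧ w = FreeGroup.of q} ∪
  {w | ∃ q : Quad n, qDistinct q ∧ w = FreeGroup.of q * FreeGroup.of q} ∪
  {w | ∃ q r : Quad n, qDistinct q ∧ qDistinct r ∧ (qFinset q ∩ qFinset r).card ≤ 2 ∧
      w = FreeGroup.of q * FreeGroup.of r * (FreeGroup.of q)⁻¹ * (FreeGroup.of r)⁻¹} ∪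
  {w | ∃ i j k l m : Fin n, ({i, j, k, l, m} : Finset (Fin n)).card = 5 ∧
      w = FreeGroup.of (i, j, k, l) * FreeGroup.of (i, j, l, m) * FreeGroup.of (j, k, l, m) *
        FreeGroup.of (i, j, k, m) * FreeGroup.of (i, k, l, m)} ∪
  {w | ∃ i j k l : Fin n, qDistinct (i, j, k, l) ∧
      (w = FreeGroup.of (i, j, k, l) * (FreeGroup.of (j, k, l, i))⁻¹ ∨
       w = FreeGroup.of (i, j, k, l) * (FreeGroup.of (l, k, j, i))⁻¹)}

/-- The group `Γ_n^4` of Kim–Manturov. -/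
abbrev Gamma (n : ℕ) : Type := PresentedGroup (gammaRels n)

/-- The generator `(ijkl)` of `Γ_n^4`. -/
def gg {n : ℕ} (q : Quad n) : Gamma n := PresentedGroup.of q

/-!
Since `(0123)` is an involution outside `ker ν`, it splits `ν`, and conjugation by it acts on
`(ker ν)ᵃᵇ`. The relations show that it inverts the class of every generator, so that `(ker ν)ᵃᵇ` is
generated by these classes, and they satisfy the relations of `Γ_5^4` with signs (a pentagon
cocycle). Conversely, a pentagon cocycle with values in `B` defines a homomorphism from `Γ_5^4` to
the generalized dihedral group `B ⋊ ℤ/2ℤ`, hence a homomorphism `(ker ν)ᵃᵇ → B`. Therefore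
`(ker ν)ᵃᵇ` is the target of the universal pentagon cocycle that vanishes on `(0123)`.

The value of a cocycle on `(0jkl)` depends only on the oriented edge `mk` of the tetrahedron
`1234`, where `m` is the missing index. Comparing the pentagon relation with its mirror image, the
skew part of this function on edges is the coboundary of a 2-torsion function `g` on vertices, and
what remains is a symmetric function `y` on edges such that opposite edges have equal doubles.
The values on `(jklm)` are then determined. The three pairs of opposite edges and the four vertices
contribute `ℤ³ ⊕ (ℤ/2ℤ)³` and, as one of the vertex values can be chosen to vanish, `(ℤ/2ℤ)³`;
vanishing on `(0123)` removes one factor `ℤ`.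
-/

/-! ### Abelianized kernels of split homomorphisms -/

section SplitKernel

variable {G Q : Type*} [Group G] [Group Q]

/-- The action of `g : G` on the abelianization of `ker ν` induced by conjugation. -/
def conjKerAb (ν : G →* Q) (g : G) : Abelianization ν.ker →* Abelianization ν.ker :=
  Abelianization.map (MulAut.conjNormal g : MulAut ν.ker).toMonoidHom

theorem conjKerAb_one (ν : G →* Q) (a : Abelianization ν.ker) : conjKerAb ν 1 a = a := by
  have : (MulAut.conjNormal (1 : G) : MulAut ν.ker).toMonoidHom = MonoidHom.id _ := by
    rw [map_one]; rfl
  rw [conjKerAb, this, Abelianization.map_id, MonoidHom.id_apply]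

variable {ν : G →* Q} {s : Q →* G} (hs : Function.LeftInverse ν s)

/-- The class in `(ker ν)ᵃᵇ` of the `ker ν`-component `x * (s (ν x))⁻¹` of `x : G`, where `s` is a
section of `ν`. -/
def kerClass (x : G) : Abelianization ν.ker :=
  Abelianization.of ⟨x * (s (ν x))⁻¹, by simp [MonoidHom.mem_ker, hs (ν x)]⟩

theorem kerClass_coe (k : ν.ker) : kerClass hs k = Abelianization.of k :=
  congrArg Abelianization.of <| Subtype.ext <| by simp [MonoidHom.mem_ker.1 k.2]

theorem kerClass_section (c : Q) : kerClass hs (s c) = 1 :=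
  (congrArg Abelianization.of <| Subtype.ext <| by simp [hs c]).trans (map_one _)

theorem kerClass_one : kerClass hs 1 = 1 := by
  simpa using kerClass_section hs 1

theorem kerClass_mul (x y : G) :
    kerClass hs (x * y) = kerClass hs x * conjKerAb ν (s (ν x)) (kerClass hs y) := by
  rw [kerClass, kerClass, kerClass, conjKerAb, Abelianization.map_of, ← map_mul]
  refine congrArg Abelianization.of (Subtype.ext ?_)
  simp [mul_assoc]

theorem closure_image_kerClass_eq_top {S : Set G} (hS : Subgroup.closure S = ⊤)
    (hconj : ∀ c, ∀ x ∈ S,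
      conjKerAb ν (s c) (kerClass hs x) ∈ Subgroup.closure (kerClass hs '' S)) :
    Subgroup.closure (kerClass hs '' S) = ⊤ := by
  set L := Subgroup.closure (kerClass hs '' S)
  have conj_mem : ∀ c, ∀ a ∈ L, conjKerAb ν (s c) a ∈ L := fun c => by
    change L ≤ L.comap (conjKerAb ν (s c))
    rw [Subgroup.closure_le]
    rintro _ ⟨x, hx, rfl⟩
    exact hconj c x hx
  have class_mem : ∀ x : G, kerClass hs x ∈ L := fun x => by
    have hx : x ∈ Subgroup.closure S := hS ▸ Subgroup.mem_top x
    induction hx using Subgroup.closure_induction with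
    | mem x hx => exact Subgroup.subset_closure ⟨x, hx, rfl⟩
    | one => exact kerClass_one hs ▸ L.one_mem
    | mul x y _ _ hx hy => exact kerClass_mul hs x y ▸ L.mul_mem hx (conj_mem _ _ hy)
    | inv x _ hx =>
      have h := kerClass_mul hs x⁻¹ x
      rw [inv_mul_cancel, kerClass_one, eq_comm, mul_eq_one_iff_eq_inv] at h
      exact h ▸ L.inv_mem (conj_mem _ _ hx)
  refine eq_top_iff.2 fun a _ => ?_
  obtain ⟨k, rfl⟩ := QuotientGroup.mk_surjective a
  have hk := class_mem k
  rwa [kerClass_coe] at hk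

/-- The homomorphism `(ker ν)ᵃᵇ → N` induced by a homomorphism `G → N ⋊ Q` over `ν`. -/
def kerAbLift {N : Type*} [CommGroup N] {φ : Q →* MulAut N} (θ : G →* N ⋊[φ] Q)
    (hθ : SemidirectProduct.rightHom.comp θ = ν) : Abelianization ν.ker →* N :=
  Abelianization.lift
    { toFun := fun k => (θ k).left
      map_one' := by simp
      map_mul' := fun k l => by
        have hk : (θ k).right = 1 := (DFunLike.congr_fun hθ (k : G)).trans k.2
        simp [hk] }

theorem kerAbLift_kerClass {N : Type*} [CommGroup N] {φ : Q →* MulAut N} (θ : G →* N ⋊[φ] Q)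
    (hθ : SemidirectProduct.rightHom.comp θ = ν) (hθs : ∀ c, (θ (s c)).left = 1) (x : G) :
    kerAbLift θ hθ (kerClass hs x) = (θ x).left := by
  simp [kerAbLift, kerClass, hθs]

end SplitKernel

theorem isCompl_range_ker_of_leftInverse {G H : Type*} [CommGroup G] [Group H] {p : G →* H}
    {i : H →* G} (hpi : Function.LeftInverse p i) : IsCompl i.range p.ker := by
  constructor
  · rw [Subgroup.disjoint_def]
    rintro _ ⟨y, rfl⟩ hy
    rw [MonoidHom.mem_ker, hpi] at hy
    rw [hy, map_one]
  · rw [codisjoint_iff, eq_top_iff]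
    intro x _
    exact Subgroup.mem_sup.2
      ⟨i (p x), ⟨_, rfl⟩, (i (p x))⁻¹ * x, by simp [MonoidHom.mem_ker, hpi (p x)], by simp⟩

theorem exists_isCompl_mulEquiv_int {G : Type*} [CommGroup G] {ι N : Type*} [AddGroup N]
    (e : G ≃* Multiplicative ((ι → ℤ) × N)) (i : ι) :
    ∃ A B : Subgroup G, IsCompl A B ∧ Nonempty (A ≃* Multiplicative ℤ) := by
  classical
  let coord : (ι → ℤ) × N →+ ℤ := (Pi.evalAddMonoidHom _ i).comp (AddMonoidHom.fst _ _)
  let incl : ℤ →+ (ι → ℤ) × N := (AddMonoidHom.inl _ _).comp (AddMonoidHom.single (fun _ => ℤ) i)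
  let p : G →* Multiplicative ℤ := (AddMonoidHom.toMultiplicative coord).comp e.toMonoidHom
  let s : Multiplicative ℤ →* G := e.symm.toMonoidHom.comp (AddMonoidHom.toMultiplicative incl)
  have hps : Function.LeftInverse p s := fun x => by simp [p, s, coord, incl]
  exact ⟨s.range, p.ker, isCompl_range_ker_of_leftInverse hps,
    ⟨(MonoidHom.ofInjective hps.injective).symm⟩⟩

/-! ### Homomorphisms out of elementary 2-groups -/

section ZModTwo

theorem ofAdd_one_mul_self :
    Multiplicative.ofAdd (1 : ZMod 2) * Multiplicative.ofAdd 1 = 1 := by decide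

/-- The homomorphism `ℤ/2ℤ → B` sending `1` to an element `b` with `2 • b = 0`. -/
def zmodTwoHom {B : Type*} [AddGroup B] (b : B) (hb : 2 • b = 0) : ZMod 2 →+ B :=
  ZMod.lift 2 ⟨zmultiplesHom B b, by simpa [two_zsmul, two_nsmul] using hb⟩

theorem zmodTwoHom_one {B : Type*} [AddGroup B] (b : B) (hb : 2 • b = 0) :
    zmodTwoHom b hb 1 = b := by
  simpa [zmodTwoHom] using
    ZMod.lift_coe 2 ⟨zmultiplesHom B b, by simpa [two_zsmul, two_nsmul] using hb⟩ 1

/-- The homomorphism from the group of order two that sends the generator to `g`. -/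
def involutionHom {G : Type*} [Group G] (g : G) (hg : g * g = 1) :
    Multiplicative (ZMod 2) →* G :=
  AddMonoidHom.toMultiplicativeLeft <|
    zmodTwoHom (Additive.ofMul g) ((two_nsmul _).trans (congrArg Additive.ofMul hg))

theorem involutionHom_ofAdd_one {G : Type*} [Group G] (g : G) (hg : g * g = 1) :
    involutionHom g hg (Multiplicative.ofAdd 1) = g :=
  congrArg Additive.toMul (zmodTwoHom_one _ _)

theorem multiplicative_zmod_two_cases (c : Multiplicative (ZMod 2)) :
    c = 1 ∨ c = Multiplicative.ofAdd 1 := by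
  revert c; decide

/-- The action of the group of order two on a commutative group by inversion; its semidirect
product is the generalized dihedral group. -/
def inversionAction (N : Type*) [CommGroup N] : Multiplicative (ZMod 2) →* MulAut N :=
  involutionHom (MulEquiv.inv N) (MulEquiv.ext inv_inv)

theorem inversionAction_ofAdd_one {N : Type*} [CommGroup N] (x : N) :
    inversionAction N (Multiplicative.ofAdd 1) x = x⁻¹ := by
  rw [inversionAction, involutionHom_ofAdd_one, MulEquiv.inv_apply]

variable {ι κ B : Type*} [Fintype ι] [Fintype κ] [AddCommGroup B]

/-- The homomorphism `ℤ^ι × (ℤ/2ℤ)^κ → B` with prescribed values on the standard generators. -/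
def freeTorsionLift (e : ι → B) (τ : κ → B) (hτ : ∀ i, 2 • τ i = 0) :
    (ι → ℤ) × (κ → ZMod 2) →+ B :=
  AddMonoidHom.coprod (∑ i, (zmultiplesHom B (e i)).comp (Pi.evalAddMonoidHom _ i))
    (∑ i, (zmodTwoHom (τ i) (hτ i)).comp (Pi.evalAddMonoidHom _ i))

theorem freeTorsionLift_free [DecidableEq ι] (e : ι → B) (τ : κ → B) (hτ : ∀ i, 2 • τ i = 0)
    (i : ι) : freeTorsionLift e τ hτ (Pi.single i 1, 0) = e i := by
  simp [freeTorsionLift, Pi.single_apply]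

theorem freeTorsionLift_torsion [DecidableEq κ] (e : ι → B) (τ : κ → B)
    (hτ : ∀ i, 2 • τ i = 0) (i : κ) :
    freeTorsionLift e τ hτ (0, Pi.single i 1) = τ i := by
  simp only [freeTorsionLift, AddMonoidHom.coprod_apply, map_zero, zero_add,
    AddMonoidHom.finsetSum_apply, AddMonoidHom.comp_apply, Pi.evalAddMonoidHom_apply]
  rw [Finset.sum_eq_single i (fun j _ hj => by simp [hj]) (by simp), Pi.single_eq_same,
    zmodTwoHom_one]

end ZModTwo

theorem freeTorsion_hom_ext {ι κ B : Type*} [Finite ι] [Finite κ] [DecidableEq ι] [DecidableEq κ]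
    [AddCommGroup B] {f g : (ι → ℤ) × (κ → ZMod 2) →+ B}
    (hfree : ∀ i, f (Pi.single i 1, 0) = g (Pi.single i 1, 0))
    (htorsion : ∀ i, f (0, Pi.single i 1) = g (0, Pi.single i 1)) : f = g := by
  have hinl : f.comp (AddMonoidHom.inl _ _) = g.comp (AddMonoidHom.inl _ _) :=
    AddMonoidHom.functions_ext' _ _ _ fun i => AddMonoidHom.ext_int (hfree i)
  have hinr : f.comp (AddMonoidHom.inr _ _) = g.comp (AddMonoidHom.inr _ _) :=
    AddMonoidHom.functions_ext' _ _ _ fun i => AddMonoidHom.ext fun c => by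
      rcases multiplicative_zmod_two_cases (Multiplicative.ofAdd c) with rfl | rfl
      · exact (map_zero _).trans (map_zero _).symm
      · exact htorsion i
  rw [← AddMonoidHom.coprod_unique f, hinl, hinr, AddMonoidHom.coprod_unique]

/-! ### The relations of `Γ_n^4` -/

instance instDecidableQDistinct {n : ℕ} (q : Quad n) : Decidable (qDistinct q) :=
  inferInstanceAs (Decidable ((qFinset q).card = 4))

/-- The left-hand side of the pentagon relation (3), with `f` in place of the generators. -/
def pentagonWord {n : ℕ} {H : Type*} [Group H] (f : Quad n → H) (i j k l m : Fin n) : H :=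
  f (i, j, k, l) * f (i, j, l, m) * f (j, k, l, m) * f (i, j, k, m) * f (i, k, l, m)

/-- A family of elements of a group satisfying the defining relations of `Γ_n^4`. -/
structure IsGammaSystem {n : ℕ} {H : Type*} [Group H] (f : Quad n → H) : Prop where
  degenerate (q : Quad n) : ¬ qDistinct q → f q = 1
  involutive (q : Quad n) : qDistinct q → f q * f q = 1
  commute (q r : Quad n) : qDistinct q → qDistinct r → (qFinset q ∩ qFinset r).card ≤ 2 →
    f q * f r = f r * f q
  pentagon (i j k l m : Fin n) : ({i, j, k, l, m} : Finset (Fin n)).card = 5 →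
    pentagonWord f i j k l m = 1
  rotate (i j k l : Fin n) : qDistinct (i, j, k, l) → f (i, j, k, l) = f (j, k, l, i)
  reverse (i j k l : Fin n) : qDistinct (i, j, k, l) → f (i, j, k, l) = f (l, k, j, i)

theorem isGammaSystem_gg (n : ℕ) : IsGammaSystem (gg : Quad n → Gamma n) where
  degenerate q hq := PresentedGroup.one_of_mem (.inl <| .inl <| .inl <| .inl ⟨q, hq, rfl⟩)
  involutive q hq := PresentedGroup.one_of_mem (.inl <| .inl <| .inl <| .inr ⟨q, hq, rfl⟩)
  commute q r hq hr hqr := mul_inv_eq_one.1 <| by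
    rw [mul_inv_rev, ← mul_assoc]
    exact PresentedGroup.one_of_mem (.inl <| .inl <| .inr ⟨q, r, hq, hr, hqr, rfl⟩)
  pentagon i j k l m h := PresentedGroup.one_of_mem (.inl <| .inr ⟨i, j, k, l, m, h, rfl⟩)
  rotate i j k l h :=
    PresentedGroup.mk_eq_mk_of_mul_inv_mem (.inr ⟨i, j, k, l, h, .inl rfl⟩)
  reverse i j k l h :=
    PresentedGroup.mk_eq_mk_of_mul_inv_mem (.inr ⟨i, j, k, l, h, .inr rfl⟩)

theorem gg_mul_self {n : ℕ} (q : Quad n) : gg q * gg q = 1 := by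
  by_cases hq : qDistinct q
  · exact (isGammaSystem_gg n).involutive q hq
  · rw [(isGammaSystem_gg n).degenerate q hq, one_mul]

theorem closure_range_gg (n : ℕ) : Subgroup.closure (Set.range (gg : Quad n → Gamma n)) = ⊤ :=
  PresentedGroup.closure_range_of _

namespace IsGammaSystem

variable {n : ℕ} {H : Type*} [Group H] {f : Quad n → H}

theorem freeGroup_lift_eq_one (hf : IsGammaSystem f) :
    ∀ r ∈ gammaRels n, FreeGroup.lift f r = 1 := by
  rintro _ ((((⟨q, hq, rfl⟩ | ⟨q, hq, rfl⟩) | ⟨q, r, hq, hr, hqr, rfl⟩) |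
    ⟨i, j, k, l, m, h, rfl⟩) | ⟨i, j, k, l, h, rfl | rfl⟩)
  · simp [hf.degenerate q hq]
  · simp [hf.involutive q hq]
  · simp [hf.commute q r hq hr hqr]
  · simpa [pentagonWord] using hf.pentagon i j k l m h
  · simp [hf.rotate i j k l h]
  · simp [hf.reverse i j k l h]

/-- The homomorphism `Γ_n^4 → H` extending a family that satisfies the relations. -/
def lift (hf : IsGammaSystem f) : Gamma n →* H :=
  PresentedGroup.toGroup hf.freeGroup_lift_eq_one

theorem lift_gg (hf : IsGammaSystem f) (q : Quad n) : hf.lift (gg q) = f q :=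
  PresentedGroup.toGroup.of _

end IsGammaSystem

/-- `j, k, l, m` are the four nonzero elements of `Fin 5`, in some order. -/
def IsArrangement (j k l m : Fin 5) : Prop := ({0, j, k, l, m} : Finset (Fin 5)).card = 5

instance instDecidableIsArrangement (j k l m : Fin 5) : Decidable (IsArrangement j k l m) :=
  inferInstanceAs (Decidable (_ = 5))

theorem qDistinct_of_pentagon : ∀ {i j k l m : Fin 5},
    ({i, j, k, l, m} : Finset (Fin 5)).card = 5 → qDistinct (i, j, k, l) ∧
      qDistinct (i, j, l, m) ∧ qDistinct (j, k, l, m) ∧ qDistinct (i, j, k, m) ∧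
      qDistinct (i, k, l, m) := by
  decide +kernel

theorem card_rotate {i j k l m : Fin 5} (h : ({i, j, k, l, m} : Finset (Fin 5)).card = 5) :
    ({j, k, l, m, i} : Finset (Fin 5)).card = 5 :=
  (congrArg Finset.card (by grind)).trans h

theorem zero_mem_of_pentagon : ∀ {i j k l m : Fin 5},
    ({i, j, k, l, m} : Finset (Fin 5)).card = 5 → i = 0 ∨ j = 0 ∨ k = 0 ∨ l = 0 ∨ m = 0 := by
  decide +kernel

section PentagonZero

variable {H : Type*} [Group H] {f : Quad 5 → H}

/-- Rotating the pentagon permutes the letters of the pentagon word cyclically. -/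
theorem pentagonWord_rotate
    (rotate : ∀ i j k l, qDistinct (i, j, k, l) → f (i, j, k, l) = f (j, k, l, i))
    {i j k l m : Fin 5} (h : ({i, j, k, l, m} : Finset (Fin 5)).card = 5)
    (hw : pentagonWord f i j k l m = 1) : pentagonWord f j k l m i = 1 := by
  obtain ⟨hijkl, hijlm, -, hijkm, hiklm⟩ := qDistinct_of_pentagon h
  rw [pentagonWord, ← rotate _ _ _ _ hijkm, ← rotate _ _ _ _ hiklm, ← rotate _ _ _ _ hijkl,
    ← rotate _ _ _ _ hijlm]
  rw [pentagonWord, mul_assoc, mul_assoc, mul_eq_one_comm] at hw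
  simpa only [mul_assoc] using hw

theorem pentagonWord_eq_one_of_zero
    (rotate : ∀ i j k l, qDistinct (i, j, k, l) → f (i, j, k, l) = f (j, k, l, i))
    (pentagon_zero : ∀ j k l m, IsArrangement j k l m → pentagonWord f 0 j k l m = 1)
    {i j k l m : Fin 5} (h : ({i, j, k, l, m} : Finset (Fin 5)).card = 5) :
    pentagonWord f i j k l m = 1 := by
  have rotateWord := @pentagonWord_rotate H _ f rotate
  have h₁ := card_rotate h
  have h₂ := card_rotate h₁
  have h₃ := card_rotate h₂
  have h₄ := card_rotate h₃
  rcases zero_mem_of_pentagon h with rfl | rfl | rfl | rfl | rfl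
  · exact pentagon_zero j k l m h
  · exact rotateWord h₄ (rotateWord h₃ (rotateWord h₂ (rotateWord h₁ (pentagon_zero k l m i h₁))))
  · exact rotateWord h₄ (rotateWord h₃ (rotateWord h₂ (pentagon_zero l m i j h₂)))
  · exact rotateWord h₄ (rotateWord h₃ (pentagon_zero m i j k h₃))
  · exact rotateWord h₄ (pentagon_zero i j k l h₄)

theorem isGammaSystem_of_pentagon_zero
    (degenerate : ∀ q, ¬ qDistinct q → f q = 1)
    (involutive : ∀ q, qDistinct q → f q * f q = 1)
    (pentagon_zero : ∀ j k l m, IsArrangement j k l m → pentagonWord f 0 j k l m = 1)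
    (rotate : ∀ i j k l, qDistinct (i, j, k, l) → f (i, j, k, l) = f (j, k, l, i))
    (reverse : ∀ i j k l, qDistinct (i, j, k, l) → f (i, j, k, l) = f (l, k, j, i)) :
    IsGammaSystem f where
  degenerate := degenerate
  involutive := involutive
  commute q r hq hr hqr := by
    have hunion := Finset.card_union_add_card_inter (qFinset q) (qFinset r)
    have hle := Finset.card_le_univ (qFinset q ∪ qFinset r)
    rw [Fintype.card_fin] at hle
    unfold qDistinct at hq hr
    omega
  pentagon _ _ _ _ _ h := pentagonWord_eq_one_of_zero rotate pentagon_zero h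
  rotate := rotate
  reverse := reverse

end PentagonZero

theorem qDistinct_rotate : ∀ {i j k l : Fin 5},
    qDistinct (i, j, k, l) → qDistinct (j, k, l, i) := by
  decide +kernel

theorem diagonals_ne : ∀ {i j k l : Fin 5}, qDistinct (i, j, k, l) →
    i ≠ j ∧ i ≠ l ∧ k ≠ j ∧ k ≠ l := by
  decide +kernel

theorem qDistinct_reverse : ∀ {i j k l : Fin 5},
    qDistinct (i, j, k, l) → qDistinct (l, k, j, i) := by
  decide +kernel

theorem exists_isArrangement : ∀ {j k l : Fin 5},
    qDistinct (0, j, k, l) → ∃ m, IsArrangement j k l m := by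
  decide +kernel

theorem zero_mem_or_isArrangement : ∀ {i j k l : Fin 5}, qDistinct (i, j, k, l) →
    i = 0 ∨ j = 0 ∨ k = 0 ∨ l = 0 ∨ IsArrangement i j k l := by
  decide +kernel

theorem quad_induction {P : Quad 5 → Prop} (degenerate : ∀ q, ¬ qDistinct q → P q)
    (rotate : ∀ i j k l, qDistinct (i, j, k, l) → P (j, k, l, i) → P (i, j, k, l))
    (zero : ∀ j k l m, IsArrangement j k l m → P (0, j, k, l))
    (nonzero : ∀ j k l m, IsArrangement j k l m → P (j, k, l, m)) (q : Quad 5) : P q := by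
  have zero_first {j k l} (h : qDistinct (0, j, k, l)) : P (0, j, k, l) :=
    (exists_isArrangement h).elim (zero j k l)
  obtain ⟨i, j, k, l⟩ := q
  by_cases h : qDistinct (i, j, k, l)
  · have h₁ := qDistinct_rotate h
    have h₂ := qDistinct_rotate h₁
    have h₃ := qDistinct_rotate h₂
    rcases zero_mem_or_isArrangement h with rfl | rfl | rfl | rfl | harr
    · exact zero_first h
    · exact rotate _ _ _ _ h (zero_first h₁)
    · exact rotate _ _ _ _ h (rotate _ _ _ _ h₁ (zero_first h₂))
    · exact rotate _ _ _ _ h (rotate _ _ _ _ h₁ (rotate _ _ _ _ h₂ (zero_first h₃)))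
    · exact nonzero _ _ _ _ harr
  · exact degenerate _ h

namespace IsArrangement

variable {j k l m : Fin 5}

theorem qDistinct_zero (h : IsArrangement j k l m) : qDistinct (0, j, k, l) :=
  (qDistinct_of_pentagon h).1

theorem qDistinct_nonzero (h : IsArrangement j k l m) : qDistinct (j, k, l, m) :=
  (qDistinct_of_pentagon h).2.2.1

theorem ne_zero : ∀ {j k l m}, IsArrangement j k l m →
    j ≠ 0 ∧ k ≠ 0 ∧ l ≠ 0 ∧ m ≠ 0 := by
  decide +kernel

theorem neg_sum_eq : ∀ {j k l m}, IsArrangement j k l m → -(j + k + l) = m := by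
  decide +kernel

theorem rotate : ∀ {j k l m}, IsArrangement j k l m → IsArrangement k l m j := by
  decide +kernel

theorem rotate_tail : ∀ {j k l m}, IsArrangement j k l m → IsArrangement j l m k := by
  decide +kernel

theorem swap_tail : ∀ {j k l m}, IsArrangement j k l m → IsArrangement j k m l := by
  decide +kernel

theorem swap_ends : ∀ {j k l m}, IsArrangement j k l m → IsArrangement l k j m := by
  decide +kernel

theorem swap_mid : ∀ {j k l m}, IsArrangement j k l m → IsArrangement j l k m := by
  decide +kernel

theorem swap_head : ∀ {j k l m}, IsArrangement j k l m → IsArrangement k j l m := by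
  decide +kernel

theorem second_ne_fourth : ∀ {j k l m}, IsArrangement j k l m → k ≠ m := by
  decide +kernel

theorem eq_or_swap_ends : ∀ {j k l m j' l'}, IsArrangement j k l m → IsArrangement j' k l' m →
    j' = j ∧ l' = l ∨ j' = l ∧ l' = j := by
  decide +kernel

end IsArrangement

theorem eq_or_isArrangement_four : ∀ {j k : Fin 5}, j ≠ 0 → k ≠ 0 →
    j = k ∨ j = 4 ∨ k = 4 ∨ ∃ m, IsArrangement 4 k j m := by
  decide +kernel

theorem eq_four_or_isArrangement : ∀ {j : Fin 5}, j ≠ 0 →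
    j = 4 ∨ ∃ k m, IsArrangement k 4 j m := by
  decide +kernel

/-- The exponent of `ν` on the generator `(ijkl)`; degenerate quadruples get `0`. -/
def parity (q : Quad 5) : ZMod 2 := if qDistinct q ∧ (0 : Fin 5) ∈ qFinset q then 1 else 0

theorem parity_zero : ∀ {j k l m}, IsArrangement j k l m → parity (0, j, k, l) = 1 := by
  decide +kernel

theorem parity_nonzero : ∀ {j k l m}, IsArrangement j k l m → parity (j, k, l, m) = 0 := by
  decide +kernel

theorem parity_degenerate {q : Quad 5} (hq : ¬ qDistinct q) : parity q = 0 :=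
  if_neg fun h => hq h.1

theorem parity_rotate : ∀ i j k l, parity (i, j, k, l) = parity (j, k, l, i) := by
  decide +kernel

theorem parity_reverse : ∀ i j k l, parity (i, j, k, l) = parity (l, k, j, i) := by
  decide +kernel

theorem isGammaSystem_parity :
    IsGammaSystem fun q : Quad 5 => Multiplicative.ofAdd (parity q) :=
  isGammaSystem_of_pentagon_zero
    (fun q hq => by rw [parity_degenerate hq, ofAdd_zero])
    (fun q _ => by rw [← ofAdd_add, CharTwo.add_self_eq_zero, ofAdd_zero])
    (fun j k l m h => by
      simp only [pentagonWord, parity_zero h, parity_zero h.rotate, parity_zero h.rotate_tail,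
        parity_zero h.swap_tail, parity_nonzero h]
      decide)
    (fun i j k l _ => by rw [parity_rotate])
    (fun i j k l _ => by rw [parity_reverse])

/-- The homomorphism `ν : Γ_5^4 → ℤ/2ℤ`. -/
def nu : Gamma 5 →* Multiplicative (ZMod 2) := isGammaSystem_parity.lift

theorem nu_gg (q : Quad 5) : nu (gg q) = Multiplicative.ofAdd (parity q) :=
  isGammaSystem_parity.lift_gg q

/-! ### Pentagon cocycles -/

/-- An assignment of elements of an abelian group to the generators that satisfies the relations
among the classes of the generators in `(ker ν)ᵃᵇ`. The signs come from the action of the quotient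
`ℤ/2ℤ` by inversion: the prefixes of the pentagon word have `ν`-values `0, 1, 0, 0, 1`. -/
structure IsPentagonCocycle {B : Type*} [AddCommGroup B] (a : Quad 5 → B) : Prop where
  degenerate (q : Quad 5) : ¬ qDistinct q → a q = 0
  rotate (i j k l : Fin 5) : qDistinct (i, j, k, l) → a (i, j, k, l) = a (j, k, l, i)
  reverse (i j k l : Fin 5) : qDistinct (i, j, k, l) → a (i, j, k, l) = a (l, k, j, i)
  two_nsmul (j k l m : Fin 5) : IsArrangement j k l m → 2 • a (j, k, l, m) = 0
  pentagon (j k l m : Fin 5) : IsArrangement j k l m →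
    a (0, j, k, l) - a (0, j, l, m) + a (j, k, l, m) + a (0, j, k, m) - a (0, k, l, m) = 0

/-- The family in the generalized dihedral group `B ⋊ ℤ/2ℤ` attached to `a : Quad 5 → B`. -/
def dihedralFamily {B : Type*} [AddCommGroup B] (a : Quad 5 → B) (q : Quad 5) :
    Multiplicative B ⋊[inversionAction (Multiplicative B)] Multiplicative (ZMod 2) :=
  ⟨Multiplicative.ofAdd (a q), Multiplicative.ofAdd (parity q)⟩

namespace IsPentagonCocycle

variable {B C : Type*} [AddCommGroup B] [AddCommGroup C] {a b : Quad 5 → B}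

theorem map (ha : IsPentagonCocycle a) (f : B →+ C) : IsPentagonCocycle (f ∘ a) where
  degenerate q hq := by simp [ha.degenerate q hq]
  rotate i j k l h := congrArg f (ha.rotate i j k l h)
  reverse i j k l h := congrArg f (ha.reverse i j k l h)
  two_nsmul j k l m h := by simpa using congrArg f (ha.two_nsmul j k l m h)
  pentagon j k l m h := by simpa using congrArg f (ha.pentagon j k l m h)

theorem ext (ha : IsPentagonCocycle a) (hb : IsPentagonCocycle b)
    (h : ∀ j k l m, IsArrangement j k l m → a (0, j, k, l) = b (0, j, k, l)) : a = b := by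
  funext q
  induction q using quad_induction with
  | degenerate q hq => rw [ha.degenerate q hq, hb.degenerate q hq]
  | rotate i j k l hq ih => rw [ha.rotate i j k l hq, ih, hb.rotate i j k l hq]
  | zero j k l m hj => exact h j k l m hj
  | nonzero j k l m hj =>
    have hpent := (ha.pentagon j k l m hj).trans (hb.pentagon j k l m hj).symm
    rw [h _ _ _ _ hj, h _ _ _ _ hj.rotate, h _ _ _ _ hj.rotate_tail, h _ _ _ _ hj.swap_tail]
      at hpent
    simpa using hpent

theorem dihedralFamily_mul_self (ha : IsPentagonCocycle a) (q : Quad 5) :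
    dihedralFamily a q * dihedralFamily a q = 1 := by
  induction q using quad_induction with
  | degenerate q hq => ext <;> simp [dihedralFamily, ha.degenerate q hq, parity_degenerate hq]
  | rotate i j k l hq ih => rwa [dihedralFamily, ha.rotate i j k l hq, parity_rotate]
  | zero j k l m h =>
    ext
    · simp [dihedralFamily, parity_zero h, inversionAction_ofAdd_one]
    · simp [dihedralFamily, parity_zero h, ← ofAdd_add, CharTwo.add_self_eq_zero]
  | nonzero j k l m h =>
    ext <;> simp [dihedralFamily, parity_nonzero h, ← ofAdd_add, ← _root_.two_nsmul,
      ha.two_nsmul j k l m h]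

theorem pentagonWord_dihedralFamily (ha : IsPentagonCocycle a) {j k l m : Fin 5}
    (h : IsArrangement j k l m) : pentagonWord (dihedralFamily a) 0 j k l m = 1 := by
  ext
  · simpa [pentagonWord, dihedralFamily, parity_zero h, parity_zero h.rotate,
      parity_zero h.rotate_tail, parity_zero h.swap_tail, parity_nonzero h, ofAdd_one_mul_self,
      inversionAction_ofAdd_one, sub_eq_add_neg] using ha.pentagon j k l m h
  · simp [pentagonWord, dihedralFamily, parity_zero h, parity_zero h.rotate,
      parity_zero h.rotate_tail, parity_zero h.swap_tail, parity_nonzero h, ofAdd_one_mul_self]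

theorem isGammaSystem_dihedralFamily (ha : IsPentagonCocycle a) :
    IsGammaSystem (dihedralFamily a) :=
  isGammaSystem_of_pentagon_zero
    (fun q hq => by simp [dihedralFamily, ha.degenerate q hq, parity_degenerate hq])
    (fun q _ => ha.dihedralFamily_mul_self q)
    (fun j k l m h => ha.pentagonWord_dihedralFamily h)
    (fun i j k l h => by rw [dihedralFamily, ha.rotate i j k l h, parity_rotate]; rfl)
    (fun i j k l h => by rw [dihedralFamily, ha.reverse i j k l h, parity_reverse]; rfl)

theorem rightHom_comp_lift_dihedralFamily (ha : IsPentagonCocycle a) :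
    SemidirectProduct.rightHom.comp ha.isGammaSystem_dihedralFamily.lift = nu :=
  PresentedGroup.ext fun q => by
    change SemidirectProduct.rightHom (ha.isGammaSystem_dihedralFamily.lift (gg q)) = nu (gg q)
    rw [IsGammaSystem.lift_gg, nu_gg]; rfl

end IsPentagonCocycle

/-! ### Cocycles from weighted tetrahedra -/

/-- Edge weights `y` and vertex weights `g` on the tetrahedron with vertices `1, 2, 3, 4` such that
opposite edges have the same double and the vertex weights have order at most two. -/
structure IsTetrahedronWeighting {B : Type*} [AddCommGroup B] (y : Fin 5 → Fin 5 → B)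
    (g : Fin 5 → B) : Prop where
  symm (j k : Fin 5) : j ≠ 0 → k ≠ 0 → y j k = y k j
  two_nsmul_edge (j k l m : Fin 5) : IsArrangement j k l m → 2 • y j l = 2 • y k m
  two_nsmul_vertex (j : Fin 5) : j ≠ 0 → 2 • g j = 0

/-- The pentagon cocycle of a weighting of the tetrahedron. The index missing from `(i, j, k, l)` is
`-(i + j + k + l)`, and if one end of a diagonal `ik` is `0`, then its other end is `i + k`. -/
def tetrahedronCocycle {B : Type*} [AddCommGroup B] (y : Fin 5 → Fin 5 → B) (g : Fin 5 → B) :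
    Quad 5 → B := fun (i, j, k, l) =>
  if ¬ qDistinct (i, j, k, l) then 0
  else if i = 0 ∨ k = 0 then y (-(i + j + k + l)) (i + k) + g (-(i + j + k + l))
  else if j = 0 ∨ l = 0 then y (-(i + j + k + l)) (j + l) + g (-(i + j + k + l))
  else y i k - y j l + (g i + g j + g k + g l)

section Tetrahedron

variable {B : Type*} [AddCommGroup B] {y : Fin 5 → Fin 5 → B} {g : Fin 5 → B}

theorem tetrahedronCocycle_zero (y : Fin 5 → Fin 5 → B) (g : Fin 5 → B) {j k l m : Fin 5}
    (h : IsArrangement j k l m) : tetrahedronCocycle y g (0, j, k, l) = y m k + g m := by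
  simp [tetrahedronCocycle, h.qDistinct_zero, -neg_add_rev, h.neg_sum_eq]

theorem tetrahedronCocycle_nonzero (y : Fin 5 → Fin 5 → B) (g : Fin 5 → B) {j k l m : Fin 5}
    (h : IsArrangement j k l m) :
    tetrahedronCocycle y g (j, k, l, m) = y j l - y k m + (g j + g k + g l + g m) := by
  obtain ⟨hj, hk, hl, hm⟩ := h.ne_zero
  simp [tetrahedronCocycle, h.qDistinct_nonzero, hj, hk, hl, hm]

theorem tetrahedronCocycle_rotate (h : IsTetrahedronWeighting y g) {i j k l : Fin 5}
    (hq : qDistinct (i, j, k, l)) :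
    tetrahedronCocycle y g (i, j, k, l) = tetrahedronCocycle y g (j, k, l, i) := by
  have hne := diagonals_ne hq
  have hsum : j + k + l + i = i + j + k + l := by abel
  rcases zero_mem_or_isArrangement hq with rfl | rfl | rfl | rfl | harr
  case inr.inr.inr.inr =>
    obtain ⟨hi, -, hk, -⟩ := harr.ne_zero
    have hedge := h.two_nsmul_edge i j k l harr
    rw [two_nsmul, two_nsmul, ← sub_eq_zero] at hedge
    rw [tetrahedronCocycle_nonzero y g harr, tetrahedronCocycle_nonzero y g harr.rotate,
      h.symm k i hk hi, ← sub_eq_zero, ← hedge]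
    abel
  all_goals
    simp_all [tetrahedronCocycle, qDistinct_rotate hq, eq_comm, -neg_add_rev]

theorem tetrahedronCocycle_flip (h : IsTetrahedronWeighting y g) {i j k l : Fin 5}
    (hq : qDistinct (k, j, i, l)) :
    tetrahedronCocycle y g (i, j, k, l) = tetrahedronCocycle y g (k, j, i, l) := by
  have hq' : qDistinct (i, j, k, l) := qDistinct_rotate (qDistinct_reverse hq)
  have hsum : k + j + i + l = i + j + k + l := by abel
  simp only [tetrahedronCocycle, hq, hq', hsum, add_comm k i, or_comm (a := k = 0),
    not_true_eq_false, if_false]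
  split_ifs with hik hjl
  · rfl
  · rfl
  · rw [h.symm i k (by tauto) (by tauto)]
    abel

theorem isPentagonCocycle_tetrahedronCocycle (h : IsTetrahedronWeighting y g) :
    IsPentagonCocycle (tetrahedronCocycle y g) where
  degenerate q hq := if_pos hq
  rotate i j k l hq := tetrahedronCocycle_rotate h hq
  reverse i j k l hq :=
    have hflip : qDistinct (k, j, i, l) := qDistinct_rotate (qDistinct_reverse hq)
    (tetrahedronCocycle_flip h hflip).trans
      (tetrahedronCocycle_rotate h (qDistinct_reverse hq)).symm
  two_nsmul j k l m hj := by
    obtain ⟨hj₀, hk₀, hl₀, hm₀⟩ := hj.ne_zero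
    have hg : 2 • (g j + g k + g l + g m) = 0 := by simp [h.two_nsmul_vertex, *]
    rw [tetrahedronCocycle_nonzero y g hj, nsmul_add, hg, nsmul_sub, h.two_nsmul_edge j k l m hj,
      sub_self, add_zero]
  pentagon j k l m hj := by
    obtain ⟨-, hk, hl, hm⟩ := hj.ne_zero
    rw [tetrahedronCocycle_zero y g hj, tetrahedronCocycle_zero y g hj.rotate_tail,
      tetrahedronCocycle_zero y g hj.swap_tail, tetrahedronCocycle_zero y g hj.rotate,
      tetrahedronCocycle_nonzero y g hj, h.symm m k hm hk, h.symm l k hl hk]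
    have hsum := congrArg₂ (· + ·) (h.two_nsmul_vertex l hl) (h.two_nsmul_vertex m hm)
    simp only [two_nsmul, add_zero] at hsum
    rw [← hsum]
    abel

end Tetrahedron

/-- The value of `a` at `(0, j, k, l)` only depends on the index `k` opposite to `0` and the missing
index `m`: it is the value of `x` on the oriented edge from `m` to `k`. -/
def IsEdgeFunction {B : Type*} (a : Quad 5 → B) (x : Fin 5 → Fin 5 → B) : Prop :=
  ∀ j k l m, IsArrangement j k l m → a (0, j, k, l) = x m k

namespace IsPentagonCocycle

variable {B : Type*} [AddCommGroup B] {a : Quad 5 → B}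

theorem reverse_zero (ha : IsPentagonCocycle a) {j k l m : Fin 5} (h : IsArrangement j k l m) :
    a (0, l, k, j) = a (0, j, k, l) := by
  rw [ha.rotate 0 l k j h.swap_ends.qDistinct_zero, ha.reverse 0 j k l h.qDistinct_zero]

theorem reverse_nonzero (ha : IsPentagonCocycle a) {j k l m : Fin 5} (h : IsArrangement j k l m) :
    a (l, k, j, m) = a (j, k, l, m) := by
  have hrev := qDistinct_reverse h.qDistinct_nonzero
  rw [ha.reverse j k l m h.qDistinct_nonzero, ha.rotate m l k j hrev]

theorem exists_isEdgeFunction (ha : IsPentagonCocycle a) :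
    ∃ x : Fin 5 → Fin 5 → B, IsEdgeFunction a x := by
  classical
  let x (m k : Fin 5) : B :=
    if h : ∃ q : Fin 5 × Fin 5, IsArrangement q.1 k q.2 m
      then a (0, h.choose.1, k, h.choose.2) else 0
  refine ⟨x, fun j k l m h => ?_⟩
  have hex : ∃ q : Fin 5 × Fin 5, IsArrangement q.1 k q.2 m := ⟨(j, l), h⟩
  have hx : x m k = a (0, hex.choose.1, k, hex.choose.2) := dif_pos hex
  rcases h.eq_or_swap_ends hex.choose_spec with ⟨hj, hl⟩ | ⟨hj, hl⟩
  · rw [hx, hj, hl]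
  · rw [hx, hj, hl, ha.reverse_zero h]

section EdgeFunction

variable {x : Fin 5 → Fin 5 → B} {j k l m : Fin 5}

theorem pentagon_edge (ha : IsPentagonCocycle a) (hx : IsEdgeFunction a x)
    (h : IsArrangement j k l m) : x m k - x k l + a (j, k, l, m) + x l k - x j l = 0 := by
  rw [← hx _ _ _ _ h, ← hx _ _ _ _ h.rotate_tail, ← hx _ _ _ _ h.swap_tail, ← hx _ _ _ _ h.rotate]
  exact ha.pentagon j k l m h

theorem skew_sum_eq_zero (ha : IsPentagonCocycle a) (hx : IsEdgeFunction a x)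
    (h : IsArrangement j k l m) :
    (x l k - x k l) + (x k j - x j k) + (x l j - x j l) = 0 := by
  have hswap := ha.pentagon_edge hx h.swap_ends
  rw [ha.reverse_nonzero h] at hswap
  have hdiff := congrArg₂ (· - ·) (ha.pentagon_edge hx h) hswap
  simp only [sub_zero] at hdiff
  rw [← hdiff]
  abel

theorem two_nsmul_skew (ha : IsPentagonCocycle a) (hx : IsEdgeFunction a x)
    (h : IsArrangement j k l m) : 2 • (x l k - x k l) = 0 := by
  have hdiff := congrArg₂ (· - ·) (ha.skew_sum_eq_zero hx h) (ha.skew_sum_eq_zero hx h.swap_mid)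
  simp only [sub_zero] at hdiff
  rw [← hdiff]
  abel

theorem edge_symm (ha : IsPentagonCocycle a) (hx : IsEdgeFunction a x) (hj : j ≠ 0)
    (hk : k ≠ 0) :
    x j k - (x j 4 - x 4 j) = x k j - (x k 4 - x 4 k) := by
  rcases eq_or_isArrangement_four hj hk with rfl | rfl | rfl | ⟨m, h⟩
  · rfl
  · abel
  · abel
  · have hsum := congrArg₂ (· - ·) (ha.skew_sum_eq_zero hx h) (ha.two_nsmul_skew hx h.swap_head)
    simp only [sub_zero] at hsum
    rw [← sub_eq_zero, ← hsum]
    abel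

end EdgeFunction

/-- The skew part of the edge function is a 2-torsion coboundary; trivialising it at the vertex `4`
leaves a symmetric edge function. -/
theorem exists_weighting (ha : IsPentagonCocycle a) :
    ∃ (y : Fin 5 → Fin 5 → B) (g : Fin 5 → B), IsTetrahedronWeighting y g ∧ g 4 = 0 ∧
      tetrahedronCocycle y g = a := by
  obtain ⟨x, hx⟩ := ha.exists_isEdgeFunction
  let g (j : Fin 5) : B := x j 4 - x 4 j
  let y (j k : Fin 5) : B := x j k - g j
  have symm (j k : Fin 5) (hj : j ≠ 0) (hk : k ≠ 0) : y j k = y k j := ha.edge_symm hx hj hk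
  have two_nsmul_vertex (j : Fin 5) (hj : j ≠ 0) : 2 • g j = 0 := by
    rcases eq_four_or_isArrangement hj with rfl | ⟨k, m, h⟩
    · simp [g]
    · exact ha.two_nsmul_skew hx h
  have two_nsmul_edge (j k l m : Fin 5) (h : IsArrangement j k l m) : 2 • y j l = 2 • y k m := by
    obtain ⟨hj, hk, hl, hm⟩ := h.ne_zero
    have hz : y j l - y k m = a (j, k, l, m) + (g m - g k + g l - g j) := by
      have hpent := ha.pentagon_edge hx h
      have hx_eq (j k : Fin 5) : x j k = y j k + g j := (sub_add_cancel _ _).symm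
      rw [hx_eq, hx_eq, hx_eq, hx_eq, symm m k hm hk, symm l k hl hk] at hpent
      rw [eq_comm, ← sub_eq_zero, ← hpent]
      abel
    rw [← sub_eq_zero, ← nsmul_sub, hz, nsmul_add, ha.two_nsmul j k l m h]
    simp [nsmul_sub, two_nsmul_vertex, hj, hk, hl, hm]
  have hw : IsTetrahedronWeighting y g := ⟨symm, two_nsmul_edge, two_nsmul_vertex⟩
  refine ⟨y, g, hw, sub_self _, (isPentagonCocycle_tetrahedronCocycle hw).ext ha ?_⟩
  intro j k l m h
  rw [tetrahedronCocycle_zero y g h, hx j k l m h, sub_add_cancel]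

end IsPentagonCocycle

/-! ### The universal cocycle -/

/-- The edge weights of the universal weighting of the tetrahedron with trivial weights on the
vertex `4` and the edge `24`. -/
def universalEdge : Fin 5 → Fin 5 → (Fin 2 → ℤ) × (Fin 6 → ZMod 2) :=
  let e (i : Fin 2) : (Fin 2 → ℤ) × (Fin 6 → ZMod 2) := (Pi.single i 1, 0)
  let τ (i : Fin 6) : (Fin 2 → ℤ) × (Fin 6 → ZMod 2) := (0, Pi.single i 1)
  ![![0, 0, 0, 0, 0],
    ![0, 0, e 0, τ 2, e 1],
    ![0, e 0, 0, e 1 + τ 1, 0],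
    ![0, τ 2, e 1 + τ 1, 0, e 0 + τ 0],
    ![0, e 1, 0, e 0 + τ 0, 0]]

/-- The vertex weights of the universal weighting of the tetrahedron with trivial weights on the
vertex `4` and the edge `24`. -/
def universalVertex : Fin 5 → (Fin 2 → ℤ) × (Fin 6 → ZMod 2) :=
  ![0, (0, Pi.single 3 1), (0, Pi.single 4 1), (0, Pi.single 5 1), 0]

theorem isTetrahedronWeighting_universal :
    IsTetrahedronWeighting universalEdge universalVertex where
  symm := by decide +kernel
  two_nsmul_edge := by decide +kernel
  two_nsmul_vertex := by decide +kernel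

/-- The universal pentagon cocycle vanishing on `(0, 1, 2, 3)`. -/
def universalCocycle : Quad 5 → (Fin 2 → ℤ) × (Fin 6 → ZMod 2) :=
  tetrahedronCocycle universalEdge universalVertex

theorem isPentagonCocycle_universalCocycle : IsPentagonCocycle universalCocycle :=
  isPentagonCocycle_tetrahedronCocycle isTetrahedronWeighting_universal

theorem universalCocycle_base : universalCocycle (0, 1, 2, 3) = 0 := by
  decide +kernel

section Universal

variable {B : Type*} [AddCommGroup B]

theorem IsTetrahedronWeighting.exists_universal_hom {y : Fin 5 → Fin 5 → B} {g : Fin 5 → B}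
    (h : IsTetrahedronWeighting y g) (hg : g 4 = 0) (hy : y 4 2 = 0) :
    ∃ f : (Fin 2 → ℤ) × (Fin 6 → ZMod 2) →+ B,
      (∀ j k, j ≠ 0 → k ≠ 0 → j ≠ k → f (universalEdge j k) = y j k) ∧
      ∀ j, j ≠ 0 → f (universalVertex j) = g j := by
  have h13 : 2 • y 1 3 = 0 := by
    rw [h.two_nsmul_edge 1 4 3 2 (by decide), hy, nsmul_zero]
  have h34 : 2 • (y 3 4 - y 1 2) = 0 := by
    rw [nsmul_sub, h.two_nsmul_edge 3 1 4 2 (by decide), sub_self]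
  have h23 : 2 • (y 2 3 - y 1 4) = 0 := by
    rw [nsmul_sub, h.two_nsmul_edge 2 1 3 4 (by decide), sub_self]
  let e : Fin 2 → B := ![y 1 2, y 1 4]
  let τ : Fin 6 → B := ![y 3 4 - y 1 2, y 2 3 - y 1 4, y 1 3, g 1, g 2, g 3]
  have hτ : ∀ i, 2 • τ i = 0 := by
    simp [Fin.forall_fin_succ, τ, h13, h34, h23, h.two_nsmul_vertex]
  let f := freeTorsionLift e τ hτ
  have he (i) : f (Pi.single i 1, 0) = e i := freeTorsionLift_free e τ hτ i
  have ht (i) : f (0, Pi.single i 1) = τ i := freeTorsionLift_torsion e τ hτ i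
  refine ⟨f, ?_, ?_⟩
  · have hlt : ∀ j k, 0 < j → j < k → f (universalEdge j k) = y j k := by
      have hy' : y 2 4 = 0 := (h.symm 2 4 (by decide) (by decide)).trans hy
      simp [Fin.forall_fin_succ, universalEdge, he, ht, e, τ, hy', -Prod.mk_add_mk]
    intro j k hj hk hjk
    rcases hjk.lt_or_gt with hjk | hkj
    · exact hlt j k (Fin.pos_of_ne_zero hj) hjk
    · rw [isTetrahedronWeighting_universal.symm j k hj hk, h.symm j k hj hk]
      exact hlt k j (Fin.pos_of_ne_zero hk) hkj
  · simp [Fin.forall_fin_succ, universalVertex, ht, τ, hg]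

theorem IsPentagonCocycle.exists_universal_hom {a : Quad 5 → B} (ha : IsPentagonCocycle a)
    (hbase : a (0, 1, 2, 3) = 0) :
    ∃ f : (Fin 2 → ℤ) × (Fin 6 → ZMod 2) →+ B, ∀ q, f (universalCocycle q) = a q := by
  obtain ⟨y, g, hw, hg, rfl⟩ := ha.exists_weighting
  have hy : y 4 2 = 0 := by
    rwa [tetrahedronCocycle_zero y g (m := 4) (by decide), hg, add_zero] at hbase
  obtain ⟨f, hedge, hvertex⟩ := hw.exists_universal_hom hg hy
  refine ⟨f, congrFun ((isPentagonCocycle_universalCocycle.map f).ext ha fun j k l m h => ?_)⟩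
  obtain ⟨-, hk, -, hm⟩ := h.ne_zero
  rw [Function.comp_apply, universalCocycle, tetrahedronCocycle_zero _ _ h, map_add,
    hedge m k hm hk h.second_ne_fourth.symm, hvertex m hm, tetrahedronCocycle_zero _ _ h]

theorem universalCocycle_hom_ext {f f' : (Fin 2 → ℤ) × (Fin 6 → ZMod 2) →+ B}
    (h : ∀ q, f (universalCocycle q) = f' (universalCocycle q)) : f = f' := by
  let K := f.eqLocus f'
  have sum_mem {j k l m} (hj : IsArrangement j k l m) :
      universalEdge m k + universalVertex m ∈ K := by
    rw [← tetrahedronCocycle_zero _ _ hj]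
    exact h _
  have vertex_mem {j l m} (hj : IsArrangement j 4 l m) : universalVertex m ∈ K := by
    have hmem := K.sub_mem (sum_mem hj) (sum_mem hj.rotate_tail.swap_mid)
    rwa [isTetrahedronWeighting_universal.symm 4 m (by decide) hj.ne_zero.2.2.2,
      show universalVertex 4 = 0 from rfl, add_zero, add_sub_cancel_left] at hmem
  have v1 : universalVertex 1 ∈ K := vertex_mem (j := 2) (l := 3) (by decide)
  have v2 : universalVertex 2 ∈ K := vertex_mem (j := 1) (l := 3) (by decide)
  have v3 : universalVertex 3 ∈ K := vertex_mem (j := 1) (l := 2) (by decide)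
  have edge_mem {m} (hm : universalVertex m ∈ K) {j k l} (hj : IsArrangement j k l m) :
      universalEdge m k ∈ K := (K.add_mem_cancel_right hm).1 (sum_mem hj)
  have e12 : universalEdge 1 2 ∈ K := edge_mem v1 (j := 3) (l := 4) (by decide)
  have e13 : universalEdge 1 3 ∈ K := edge_mem v1 (j := 2) (l := 4) (by decide)
  have e14 : universalEdge 1 4 ∈ K := edge_mem v1 (j := 2) (l := 3) (by decide)
  have e23 : universalEdge 2 3 ∈ K := edge_mem v2 (j := 1) (l := 4) (by decide)
  have e34 : universalEdge 3 4 ∈ K := edge_mem v3 (j := 1) (l := 2) (by decide)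
  refine freeTorsion_hom_ext (Fin.forall_fin_two.2 ⟨e12, e14⟩) ?_
  have t0 : (0, Pi.single 0 1) ∈ K := by
    rw [show (0, Pi.single 0 1) = universalEdge 3 4 - universalEdge 1 2 by decide +kernel]
    exact K.sub_mem e34 e12
  have t1 : (0, Pi.single 1 1) ∈ K := by
    rw [show (0, Pi.single 1 1) = universalEdge 2 3 - universalEdge 1 4 by decide +kernel]
    exact K.sub_mem e23 e14
  intro i
  fin_cases i
  exacts [t0, t1, e13, v1, v2, v3]

end Universal

/-! ### Classes of the generators -/

section GeneratorClasses

/-- The section of `ν` that sends the generator of `ℤ/2ℤ` to the generator `(0123)`. -/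
def nuSection : Multiplicative (ZMod 2) →* Gamma 5 :=
  involutionHom (gg (0, 1, 2, 3)) (gg_mul_self _)

theorem nuSection_ofAdd_one : nuSection (Multiplicative.ofAdd 1) = gg (0, 1, 2, 3) :=
  involutionHom_ofAdd_one _ _

theorem leftInverse_nu_nuSection : Function.LeftInverse nu nuSection := fun c => by
  rcases multiplicative_zmod_two_cases c with rfl | rfl
  · rw [map_one, map_one]
  · rw [nuSection_ofAdd_one, nu_gg, parity_zero (m := 4) (by decide)]

/-- The class of the generator `(ijkl)` in `(ker ν)ᵃᵇ`. -/
def generatorClass (q : Quad 5) : Abelianization nu.ker :=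
  kerClass leftInverse_nu_nuSection (gg q)

theorem generatorClass_base : generatorClass (0, 1, 2, 3) = 1 := by
  rw [generatorClass, ← nuSection_ofAdd_one, kerClass_section]

/-- The action on `(ker ν)ᵃᵇ` of conjugation by the generator `(0123)`. -/
def baseConj : Abelianization nu.ker →* Abelianization nu.ker :=
  conjKerAb nu (nuSection (Multiplicative.ofAdd 1))

theorem kerClass_mul_of_nu_eq_one {x : Gamma 5} (hx : nu x = 1) (y : Gamma 5) :
    kerClass leftInverse_nu_nuSection (x * y) =
      kerClass leftInverse_nu_nuSection x * kerClass leftInverse_nu_nuSection y := by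
  rw [kerClass_mul, hx, map_one, conjKerAb_one]

theorem kerClass_mul_of_nu_eq_ofAdd_one {x : Gamma 5} (hx : nu x = Multiplicative.ofAdd 1)
    (y : Gamma 5) :
    kerClass leftInverse_nu_nuSection (x * y) =
      kerClass leftInverse_nu_nuSection x * baseConj (kerClass leftInverse_nu_nuSection y) := by
  rw [kerClass_mul, hx, baseConj]

variable {j k l m : Fin 5}

theorem nu_gg_zero (h : IsArrangement j k l m) : nu (gg (0, j, k, l)) = Multiplicative.ofAdd 1 := by
  rw [nu_gg, parity_zero h]

theorem nu_gg_nonzero (h : IsArrangement j k l m) : nu (gg (j, k, l, m)) = 1 := by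
  rw [nu_gg, parity_nonzero h, ofAdd_zero]

theorem baseConj_generatorClass_zero (h : IsArrangement j k l m) :
    baseConj (generatorClass (0, j, k, l)) = (generatorClass (0, j, k, l))⁻¹ := by
  refine eq_inv_of_mul_eq_one_right ?_
  rw [generatorClass, ← kerClass_mul_of_nu_eq_ofAdd_one (nu_gg_zero h), gg_mul_self, kerClass_one]

theorem generatorClass_nonzero_mul_self (h : IsArrangement j k l m) :
    generatorClass (j, k, l, m) * generatorClass (j, k, l, m) = 1 := by
  rw [generatorClass, ← kerClass_mul_of_nu_eq_one (nu_gg_nonzero h), gg_mul_self, kerClass_one]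

theorem generatorClass_pentagon (h : IsArrangement j k l m) :
    generatorClass (0, j, k, l) * (generatorClass (0, j, l, m))⁻¹ * generatorClass (j, k, l, m) *
      generatorClass (0, j, k, m) * (generatorClass (0, k, l, m))⁻¹ = 1 := by
  have hword := congrArg (kerClass leftInverse_nu_nuSection)
    ((isGammaSystem_gg 5).pentagon 0 j k l m h)
  have hν₁ := nu_gg_zero h
  have hν₂ := nu_gg_zero h.rotate_tail
  have hν₃ := nu_gg_nonzero h
  have hν₄ := nu_gg_zero h.swap_tail
  rw [pentagonWord, kerClass_mul_of_nu_eq_ofAdd_one (by simp [*, ofAdd_one_mul_self]),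
    kerClass_mul_of_nu_eq_one (by simp [*, ofAdd_one_mul_self]),
    kerClass_mul_of_nu_eq_one (by simp [*, ofAdd_one_mul_self]),
    kerClass_mul_of_nu_eq_ofAdd_one hν₁, kerClass_one] at hword
  rwa [← baseConj_generatorClass_zero h.rotate_tail, ← baseConj_generatorClass_zero h.rotate]

theorem isPentagonCocycle_generatorClass :
    IsPentagonCocycle fun q => Additive.ofMul (generatorClass q) where
  degenerate q hq := by
    rw [generatorClass, (isGammaSystem_gg 5).degenerate q hq, kerClass_one, ofMul_one]
  rotate i j k l h := by
    rw [generatorClass, (isGammaSystem_gg 5).rotate i j k l h]; rfl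
  reverse i j k l h := by
    rw [generatorClass, (isGammaSystem_gg 5).reverse i j k l h]; rfl
  two_nsmul j k l m h := by
    rw [two_nsmul, ← ofMul_mul, generatorClass_nonzero_mul_self h, ofMul_one]
  pentagon j k l m h := by
    simpa [← div_eq_mul_inv] using congrArg Additive.ofMul (generatorClass_pentagon h)

theorem baseConj_generatorClass (q : Quad 5) :
    baseConj (generatorClass q) = (generatorClass q)⁻¹ :=
  -- Both sides are cocycles, hence determined by the generators containing `0`.
  congrArg Additive.toMul <| congrFun (a := q) <|
    (isPentagonCocycle_generatorClass.map (MonoidHom.toAdditive baseConj)).ext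
      (isPentagonCocycle_generatorClass.map negAddMonoidHom)
      fun _ _ _ _ h => congrArg Additive.ofMul (baseConj_generatorClass_zero h)

theorem closure_range_generatorClass : Subgroup.closure (Set.range generatorClass) = ⊤ := by
  have hrange : Set.range generatorClass = kerClass leftInverse_nu_nuSection '' Set.range gg :=
    Set.range_comp _ _
  rw [hrange]
  refine closure_image_kerClass_eq_top _ (closure_range_gg 5) ?_
  rintro c _ ⟨q, rfl⟩
  have hq : kerClass leftInverse_nu_nuSection (gg q) ∈
      Subgroup.closure (kerClass leftInverse_nu_nuSection '' Set.range gg) :=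
    Subgroup.subset_closure ⟨gg q, ⟨q, rfl⟩, rfl⟩
  rcases multiplicative_zmod_two_cases c with rfl | rfl
  · rwa [map_one, conjKerAb_one]
  · exact (baseConj_generatorClass q).symm ▸ Subgroup.inv_mem _ hq

end GeneratorClasses

theorem nonempty_kerAb_equiv :
    Nonempty (Abelianization nu.ker ≃* Multiplicative ((Fin 2 → ℤ) × (Fin 6 → ZMod 2))) := by
  have hX := isPentagonCocycle_universalCocycle
  let Φ : Abelianization nu.ker →* Multiplicative ((Fin 2 → ℤ) × (Fin 6 → ZMod 2)) :=
    kerAbLift hX.isGammaSystem_dihedralFamily.lift hX.rightHom_comp_lift_dihedralFamily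
  have hΦ (q) : Φ (generatorClass q) = Multiplicative.ofAdd (universalCocycle q) := by
    rw [generatorClass, kerAbLift_kerClass, IsGammaSystem.lift_gg]
    · rfl
    · intro c
      rcases multiplicative_zmod_two_cases c with rfl | rfl
      · rw [map_one, map_one, SemidirectProduct.one_left]
      · rw [nuSection_ofAdd_one, IsGammaSystem.lift_gg]
        exact congrArg Multiplicative.ofAdd universalCocycle_base
  obtain ⟨f, hf⟩ := isPentagonCocycle_generatorClass.exists_universal_hom
    (congrArg Additive.ofMul generatorClass_base)
  let Ψ := AddMonoidHom.toMultiplicativeLeft f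
  have hΨ (q) : Ψ (Multiplicative.ofAdd (universalCocycle q)) = generatorClass q := hf q
  refine ⟨Φ.toMulEquiv Ψ ?_ ?_⟩
  · refine MonoidHom.eq_of_eqOn_dense closure_range_generatorClass ?_
    rintro _ ⟨q, rfl⟩
    simp [hΦ, hΨ]
  · refine MonoidHom.toAdditive.injective (universalCocycle_hom_ext fun q => ?_)
    exact congrArg Multiplicative.toAdd ((congrArg Φ (hΨ q)).trans (hΦ q))

/-- The map sending each generator `(ijkl)` of `Γ_5^4` to `1 ∈ ℤ/2ℤ` if `1 ∈ {i,j,k,l}`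
(with 0-based indices: if `0 ∈ {i,j,k,l}`) and to `0` otherwise extends to a well-defined
homomorphism `ν : Γ_5^4 → ℤ/2ℤ`, and the abelianization of `Ker ν` is isomorphic to
`ℤ² ⊕ (ℤ/2ℤ)^6`; in particular the abelianization of `Ker ν` has a `ℤ`-direct summand. -/
theorem gamma_five_nu_kernel :
    ∃ ν : Gamma 5 →* Multiplicative (ZMod 2),
      (∀ q : Quad 5, qDistinct q →
        ν (gg q) =
          Multiplicative.ofAdd (if (0 : Fin 5) ∈ qFinset q then (1 : ZMod 2) else 0)) ∧
      Nonempty (Abelianization ↥ν.ker ≃*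
        Multiplicative ((Fin 2 → ℤ) × (Fin 6 → ZMod 2))) ∧
      ∃ A B : Subgroup (Abelianization ↥ν.ker),
        IsCompl A B ∧ Nonempty (A ≃* Multiplicative ℤ) := by
  obtain ⟨e⟩ := nonempty_kerAb_equiv
  refine ⟨nu, fun q hq => ?_, ⟨e⟩, exists_isCompl_mulEquiv_int e 0⟩
  simp only [nu_gg, parity, hq, true_and]
end
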